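/- arXiv:2510.19727 — 2 statements merged into one kernel-verified Lean document; each statement's English description precedes it below -/
import Mathlib

section
/- If (m, n) is an interlocking pair of positive integers with m·n = P_k, where P_k denotes the product of the first k primes, then k ≤ 8. -/
/-- `(m, n)` is an interlocking pair: both are positive, and between any two
consecutive divisors (the smaller one exceeding 1) of either number there is a
divisor of the other. -/
def Interlocking (m n : ℕ) : Prop :=
  0 < m ∧ 0 < n ∧
  (∀ d d' : ℕ, d ∣ n → d' ∣ n → 1 < d → d < d' →
    (∀ e : ℕ, e ∣ n → ¬(d < e ∧ e < d')) →
    ∃ e : ℕ, e ∣ m ∧ d < e ∧ e < d') ∧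
  (∀ d d' : ℕ, d ∣ m → d' ∣ m → 1 < d → d < d' →
    (∀ e : ℕ, e ∣ m → ¬(d < e ∧ e < d')) →
    ∃ e : ℕ, e ∣ n ∧ d < e ∧ e < d')

/-- A positive integer `n` is separable if some `m` interlocks with it. -/
def Separable (n : ℕ) : Prop := ∃ m : ℕ, Interlocking m n

/-- `primesProd k` is the product of the first `k` primes. -/
noncomputable def primesProd (k : ℕ) : ℕ := ∏ i ∈ Finset.range k, Nat.nth Nat.Prime i

/-!
Between any two divisors greater than `1` of one number of an interlocking pair lies a divisor of
the other, so the divisors greater than `1` of the two numbers alternate. A common divisor `e > 1`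
would have to be the only divisor greater than `1` of both, so distinct interlocking numbers are
coprime. If moreover `4 ∤ m * n` and `2 ∣ n`, the alternation decides in increasing order which of
`m` and `n` each of the primes `2, 3, 5, 7, 11, 13, 23` divides:

* `n`: `2, 5, 13, 23`
* `m`: `3, 7, 11`

But then `n` is divisible by both `23` and `26`, while neither `24` nor `25` is coprime to `n`.
-/

namespace Interlocking

variable {m n d d' : ℕ}

theorem symm (h : Interlocking m n) : Interlocking n m :=
  ⟨h.2.1, h.1, h.2.2.2, h.2.2.1⟩

theorem exists_dvd_between (h : Interlocking m n) (hd : d ∣ n) (hd' : d' ∣ n) (hd1 : 1 < d)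
    (hlt : d < d') : ∃ e, e ∣ m ∧ d < e ∧ e < d' := by
  have hex : ∃ x, x ∣ n ∧ d < x := ⟨d', hd', hlt⟩
  obtain ⟨hnext, hlt_next⟩ := Nat.find_spec hex
  obtain ⟨e, he, hde, he_next⟩ := h.2.2.1 d (Nat.find hex) hd hnext hd1 hlt_next
    fun _ hx hbetween => Nat.find_min hex hbetween.2 ⟨hx, hbetween.1⟩
  exact ⟨e, he, hde, he_next.trans_le (Nat.find_min' hex ⟨hd', hlt⟩)⟩

-- Infinite descent: a divisor of either number other than `e` yields a divisor of the other one
-- strictly closer to `e`.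
theorem eq_of_dvd_of_common_dvd {m n d e : ℕ} (h : Interlocking m n) (he1 : 1 < e) (hem : e ∣ m)
    (hen : e ∣ n) (hd1 : 1 < d) (hd : d ∣ n) : d = e := by
  rcases lt_trichotomy d e with hlt | heq | hgt
  · obtain ⟨c, hc, hdc, hce⟩ := h.exists_dvd_between hd hen hd1 hlt
    exact absurd (h.symm.eq_of_dvd_of_common_dvd he1 hen hem (hd1.trans hdc) hc) hce.ne
  · exact heq
  · obtain ⟨c, hc, hec, _⟩ := h.exists_dvd_between hen hd he1 hgt
    exact absurd (h.symm.eq_of_dvd_of_common_dvd he1 hen hem (he1.trans hec) hc) hec.ne'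
termination_by (d - e) + (e - d)

theorem coprime (h : Interlocking m n) (hne : m ≠ n) : m.Coprime n := by
  by_contra hgcd
  have hgm := Nat.gcd_dvd_left m n
  have hgn := Nat.gcd_dvd_right m n
  have hg1 : 1 < m.gcd n := Nat.lt_of_le_of_ne (Nat.gcd_pos_of_pos_left n h.1) (Ne.symm hgcd)
  have hm : m = m.gcd n := h.symm.eq_of_dvd_of_common_dvd hg1 hgn hgm
    (hg1.trans_le (Nat.le_of_dvd h.1 hgm)) dvd_rfl
  have hn : n = m.gcd n := h.eq_of_dvd_of_common_dvd hg1 hgm hgn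
    (hg1.trans_le (Nat.le_of_dvd h.2.1 hgn)) dvd_rfl
  exact hne (hm.trans hn.symm)

-- Testing coprimality with a known divisor `q` of `n` makes the hypothesis on the gap decidable.
theorem not_dvd_of_forall_Ioo_not_coprime (h : Interlocking m n) (hmn : m.Coprime n) {q : ℕ}
    (hq : q ∣ n) (hd : d ∣ n) (hd1 : 1 < d) (hlt : d < d')
    (hgap : ∀ e ∈ Finset.Ioo d d', ¬ e.Coprime q) : ¬ d' ∣ n := fun hd' => by
  obtain ⟨e, he, hde, hed'⟩ := h.exists_dvd_between hd hd' hd1 hlt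
  exact hgap e (Finset.mem_Ioo.2 ⟨hde, hed'⟩) (hmn.of_dvd he hq)

theorem not_forall_dvd_mul_of_two_dvd (h : Interlocking m n) (h4 : ¬ 4 ∣ m * n) (h2 : 2 ∣ n) :
    ¬ ∀ p ∈ ({2, 3, 5, 7, 11, 13, 23} : Finset ℕ), p ∣ m * n := fun hdvd => by
  have hne : m ≠ n := by
    rintro rfl
    exact h4 (mul_dvd_mul h2 h2)
  have hmn : m.Coprime n := h.coprime hne
  have hprime : ∀ p ∈ ({2, 3, 5, 7, 11, 13, 23} : Finset ℕ), p.Prime := by decide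
  have hor (p : ℕ) (hp : p ∈ ({2, 3, 5, 7, 11, 13, 23} : Finset ℕ)) : p ∣ m ∨ p ∣ n :=
    (hprime p hp).dvd_mul.1 (hdvd p hp)
  have h3 : 3 ∣ m := (hor 3 (by decide)).resolve_right <|
    h.not_dvd_of_forall_Ioo_not_coprime hmn h2 h2 (by decide) (by decide) (by decide)
  have h5 : 5 ∣ n := (hor 5 (by decide)).resolve_left fun h5 => by
    obtain ⟨e, he, hlt, hgt⟩ := h.symm.exists_dvd_between h3 h5 (by decide) (by decide)
    obtain rfl : e = 4 := by omega
    exact h4 (he.mul_left m)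
  have h10 : 10 ∣ n := Nat.Coprime.mul_dvd_of_dvd_of_dvd (by decide) h2 h5
  have h7 : 7 ∣ m := (hor 7 (by decide)).resolve_right <|
    h.not_dvd_of_forall_Ioo_not_coprime hmn h2 h5 (by decide) (by decide) (by decide)
  have h11 : 11 ∣ m := (hor 11 (by decide)).resolve_right <|
    h.not_dvd_of_forall_Ioo_not_coprime hmn h10 h10 (by decide) (by decide) (by decide)
  have h13 : 13 ∣ n := (hor 13 (by decide)).resolve_left <|
    h.symm.not_dvd_of_forall_Ioo_not_coprime hmn.symm h3 h11 (by decide) (by decide) (by decide)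
  have h21 : 21 ∣ m := Nat.Coprime.mul_dvd_of_dvd_of_dvd (by decide) h3 h7
  have h23 : 23 ∣ n := (hor 23 (by decide)).resolve_left <|
    h.symm.not_dvd_of_forall_Ioo_not_coprime hmn.symm h11 h21 (by decide) (by decide) (by decide)
  have h26 : 26 ∣ n := Nat.Coprime.mul_dvd_of_dvd_of_dvd (by decide) h2 h13
  exact h.not_dvd_of_forall_Ioo_not_coprime hmn h10 h23 (by decide) (by decide) (by decide) h26

end Interlocking

theorem squarefree_primesProd (k : ℕ) : Squarefree (primesProd k) := by
  refine Finset.squarefree_prod_of_pairwise_isCoprime (fun i _ j _ hij => ?_)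
    fun i _ => (Nat.prime_nth_prime i).squarefree
  refine Nat.coprime_iff_isRelPrime.1 <|
    (Nat.coprime_primes (Nat.prime_nth_prime i) (Nat.prime_nth_prime j)).2 ?_
  exact (Nat.nth_injective Nat.infinite_setOfPred_prime).ne hij

theorem not_four_dvd_primesProd (k : ℕ) : ¬ 4 ∣ primesProd k := fun h4 =>
  Nat.prime_two.not_isUnit (squarefree_primesProd k 2 h4)

theorem dvd_primesProd {p k : ℕ} (hp : p.Prime) (hpk : p.primeCounting' < k) :
    p ∣ primesProd k := by
  rw [← Nat.nth_count hp]
  exact Finset.dvd_prod_of_mem (Nat.nth Nat.Prime) (Finset.mem_range.2 hpk)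

theorem forall_dvd_primesProd {k : ℕ} (hk : 8 < k) :
    ∀ p ∈ ({2, 3, 5, 7, 11, 13, 23} : Finset ℕ), p ∣ primesProd k := fun p hp => by
  have hprime_le : ∀ p ∈ ({2, 3, 5, 7, 11, 13, 23} : Finset ℕ), p.Prime ∧ p ≤ 23 := by decide
  have hcount : Nat.primeCounting' 23 = 8 := by decide
  obtain ⟨hp_prime, hp_le⟩ := hprime_le p hp
  exact dvd_primesProd hp_prime <|
    ((Nat.monotone_primeCounting' hp_le).trans_eq hcount).trans_lt hk

theorem interlocking_primesProd_bound_general (m n : ℕ) (h : Interlocking m n)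
    (h4 : ¬ 4 ∣ m * n) : ¬ ∀ p ∈ ({2, 3, 5, 7, 11, 13, 23} : Finset ℕ), p ∣ m * n := by
  intro hdvd
  rcases Nat.prime_two.dvd_mul.1 (hdvd 2 (by decide)) with h2 | h2
  · rw [mul_comm] at h4 hdvd
    exact h.symm.not_forall_dvd_mul_of_two_dvd h4 h2 hdvd
  · exact h.not_forall_dvd_mul_of_two_dvd h4 h2 hdvd

/-- If `(m, n)` is an interlocking pair with `m * n` equal to the product of the
first `k` primes, then `k ≤ 8`. -/
theorem interlocking_primesProd_bound (m n k : ℕ) (h : Interlocking m n)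
    (hmn : m * n = primesProd k) : k ≤ 8 :=
  le_of_not_gt fun hk => interlocking_primesProd_bound_general m n h
    (hmn ▸ not_four_dvd_primesProd k) (hmn ▸ forall_dvd_primesProd hk)
end

section
/- For every integer i ≥ 4, there exists a prime number p with 2^(2^(i-1)) < p < 2^(2^(i-1)) · e^(1/4^i). -/
/-!
Put `k = i - 1`, `x = 2 ^ 2 ^ k` and `δ = 1 / 4 ^ (k + 1)`. Since `1 / δ` is only of order
`(log x) ^ 2`, for large `k` the prime number theorem with a classical error term is strong enough.
The sum of `Λ(n) / n` weighted by a Gaussian in `log n`, centred at `log x + δ / 2` and much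
narrower than `δ`, is the integral of `-ζ' / ζ` on a vertical line against a Gaussian kernel. The
part of the line up to the height at which the kernel has decayed is moved into the classical
zero-free region, which a nonnegative cosine polynomial provides with explicit constants; the
residue at `1` is the main term. If no prime lay in `(x, x * e ^ δ)`, the sum would consist of
Gaussian tails and of proper prime powers, and would be smaller. The constants suffice for `k ≥ 16`.

For smaller `k` primes are exhibited, of the form `2 ^ 2 ^ k + j * 2 ^ (2 ^ (k - 1) + 1) + 1` for
`k ≠ 5`. A prime factor of such a number `p` below its square root is excluded by a single
congruence `a ^ ((p - 1) / 2) = -1` modulo `p`, as in Proth's theorem.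
-/

/-! ### Bounds for the zeta function -/

section

open Complex Filter Topology

/-- `s - 1` times the error `∫ u in n..n + 1, u ^ (-s) - (n + 1) ^ (-s)` of the Riemann sum for
`∑ n ^ (-s)`. The factor `s - 1` removes the pole of the primitive, so that this is entire in `s`
for `n ≠ 0`. -/
noncomputable def eulerMaclaurinTerm (n : ℕ) (s : ℂ) : ℂ :=
  (n : ℂ) ^ (1 - s) - (n + 1 : ℂ) ^ (1 - s) - (s - 1) * (n + 1 : ℂ) ^ (-s)

lemma hasDerivAt_cpow_add_mul_cpow (a s : ℂ) {u : ℝ} (hu : 0 < u) :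
    HasDerivAt (fun u : ℝ => (u : ℂ) ^ (1 - s) + (s - 1) * ((u - a) * (u : ℂ) ^ (-s)))
      (-((s - 1) * s * (u - a) * (u : ℂ) ^ (-s - 1))) u := by
  have hu' : (u : ℂ) ∈ slitPlane := by simp [hu]
  have hpow (c : ℂ) : HasDerivAt (fun z : ℂ => z ^ c) (c * (u : ℂ) ^ (c - 1)) u := by
    simpa using (hasDerivAt_id (u : ℂ)).cpow_const (c := c) hu'
  have hlin := (hasDerivAt_id (u : ℂ)).sub_const a
  refine HasDerivAt.comp_ofReal (e := fun z : ℂ => z ^ (1 - s) + (s - 1) * ((z - a) * z ^ (-s)))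
    (((hpow (1 - s)).add ((hlin.mul (hpow (-s))).const_mul (s - 1))).congr_deriv ?_)
  rw [show 1 - s - 1 = -s by ring]
  simp only [id]
  ring

lemma eulerMaclaurinTerm_eq_integral {n : ℕ} (hn : 1 ≤ n) (s : ℂ) :
    eulerMaclaurinTerm n s
      = ∫ u in (n : ℝ)..n + 1, (s - 1) * s * (u - n) * (u : ℂ) ^ (-s - 1) := by
  have hpos : ∀ u ∈ Set.uIcc (n : ℝ) (n + 1), 0 < u := fun u hu => by
    rw [Set.uIcc_of_le (by linarith)] at hu
    exact (Nat.cast_pos.mpr hn).trans_le hu.1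
  have hcont : ContinuousOn (fun u : ℝ => -((s - 1) * s * (u - n) * (u : ℂ) ^ (-s - 1)))
      (Set.uIcc (n : ℝ) (n + 1)) := fun u hu =>
    ((ContinuousAt.mul (by fun_prop) ((continuousAt_cpow_const (by simp [hpos u hu])).comp
      (by fun_prop))).neg).continuousWithinAt
  have h := intervalIntegral.integral_eq_sub_of_hasDerivAt
    (fun u hu => hasDerivAt_cpow_add_mul_cpow n s (hpos u hu)) hcont.intervalIntegrable
  rw [intervalIntegral.integral_neg, neg_eq_iff_eq_neg] at h
  rw [h, eulerMaclaurinTerm]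
  push_cast
  ring

lemma norm_eulerMaclaurinTerm_le_integral {n : ℕ} (hn : 1 ≤ n) (s : ℂ) :
    ‖eulerMaclaurinTerm n s‖ ≤ ‖s - 1‖ * ‖s‖ * ∫ u in (n : ℝ)..n + 1, u ^ (-s.re - 1) := by
  have hpos : ∀ u ∈ Set.uIcc (n : ℝ) (n + 1), 0 < u := fun u hu => by
    rw [Set.uIcc_of_le (by linarith)] at hu
    exact (Nat.cast_pos.mpr hn).trans_le hu.1
  have hint : IntervalIntegrable (fun u : ℝ => ‖s - 1‖ * ‖s‖ * u ^ (-s.re - 1))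
      MeasureTheory.volume n (n + 1) :=
    ContinuousOn.intervalIntegrable fun u hu => (continuousAt_const.mul
      (Real.continuousAt_rpow_const _ _ (Or.inl (hpos u hu).ne'))).continuousWithinAt
  rw [eulerMaclaurinTerm_eq_integral hn, ← intervalIntegral.integral_const_mul]
  refine intervalIntegral.norm_integral_le_of_norm_le (by linarith)
    (Eventually.of_forall fun u hu => ?_) hint
  have hfract : ‖(u : ℂ) - n‖ ≤ 1 := by
    rw [show (u : ℂ) - n = ((u - n : ℝ) : ℂ) by push_cast; ring, norm_real, Real.norm_eq_abs,
      abs_le]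
    constructor <;> linarith [hu.1, hu.2]
  have hu0 : 0 < u := (Nat.cast_nonneg n).trans_lt hu.1
  rw [norm_mul, norm_mul, norm_mul, norm_cpow_eq_rpow_re_of_pos hu0, sub_re, neg_re, one_re]
  exact mul_le_mul_of_nonneg_right (mul_le_of_le_one_right (by positivity) hfract)
    (Real.rpow_nonneg hu0.le _)

lemma norm_eulerMaclaurinTerm_le {n : ℕ} (hn : 1 ≤ n) {s : ℂ} (hs : 0 < s.re) :
    ‖eulerMaclaurinTerm n s‖
      ≤ ‖s - 1‖ * (‖s‖ / s.re) * ((n : ℝ) ^ (-s.re) - (n + 1 : ℝ) ^ (-s.re)) := by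
  have h := norm_eulerMaclaurinTerm_le_integral hn s
  have hn0 : (0 : ℝ) < n := Nat.cast_pos.mpr hn
  rw [integral_rpow (Or.inr ⟨by linarith, Set.notMem_uIcc_of_lt hn0 (by linarith)⟩),
    sub_add_cancel] at h
  exact h.trans_eq (by field_simp; ring)

lemma norm_eulerMaclaurinTerm_le_rpow {n : ℕ} (hn : 1 ≤ n) {a : ℝ} {s : ℂ} (ha : -1 ≤ a)
    (hs : a ≤ s.re) :
    ‖eulerMaclaurinTerm n s‖ ≤ ‖s - 1‖ * ‖s‖ * (n : ℝ) ^ (-a - 1) := by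
  refine (norm_eulerMaclaurinTerm_le_integral hn s).trans
    (mul_le_mul_of_nonneg_left ?_ (by positivity))
  have hn0 : (0 : ℝ) < n := Nat.cast_pos.mpr hn
  have hle : ∀ u ∈ Set.uIoc (n : ℝ) (n + 1), ‖u ^ (-s.re - 1)‖ ≤ (n : ℝ) ^ (-a - 1) := by
    intro u hu
    rw [Set.uIoc_of_le (by linarith)] at hu
    rw [Real.norm_of_nonneg (Real.rpow_nonneg (hn0.trans hu.1).le _)]
    calc u ^ (-s.re - 1) ≤ (n : ℝ) ^ (-s.re - 1) :=
          Real.rpow_le_rpow_of_nonpos hn0 hu.1.le (by linarith)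
      _ ≤ (n : ℝ) ^ (-a - 1) :=
          Real.rpow_le_rpow_of_exponent_le (Nat.one_le_cast.mpr hn) (by linarith)
  simpa using (le_abs_self _).trans (intervalIntegral.norm_integral_le_of_norm_le_const hle)

lemma summable_natCast_add_rpow {p : ℝ} (hp : p < -1) (Y : ℕ) :
    Summable fun n : ℕ => ((Y + n : ℕ) : ℝ) ^ p := by
  simpa only [add_comm Y] using (summable_nat_add_iff Y).mpr (Real.summable_nat_rpow.mpr hp)

lemma summable_eulerMaclaurinTerm {Y : ℕ} (hY : 1 ≤ Y) {s : ℂ} (hs : 0 < s.re) :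
    Summable fun n => eulerMaclaurinTerm (Y + n) s :=
  ((summable_natCast_add_rpow (by linarith) Y).mul_left _).of_norm_bounded fun _ =>
    norm_eulerMaclaurinTerm_le_rpow (by omega) (by linarith) le_rfl

lemma norm_tsum_eulerMaclaurinTerm_le {Y : ℕ} (hY : 1 ≤ Y) {s : ℂ} (hs : 0 < s.re) :
    ‖∑' n, eulerMaclaurinTerm (Y + n) s‖ ≤ ‖s - 1‖ * (‖s‖ / s.re) * (Y : ℝ) ^ (-s.re) := by
  refine le_of_tendsto (summable_eulerMaclaurinTerm hY hs).hasSum.tendsto_sum_nat.norm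
    (Eventually.of_forall fun N => ?_)
  calc ‖∑ n ∈ Finset.range N, eulerMaclaurinTerm (Y + n) s‖
      ≤ ∑ n ∈ Finset.range N, ‖s - 1‖ * (‖s‖ / s.re) *
          (((Y + n : ℕ) : ℝ) ^ (-s.re) - ((Y + (n + 1) : ℕ) : ℝ) ^ (-s.re)) := by
        refine norm_sum_le_of_le _ fun n _ => ?_
        simpa [add_assoc] using norm_eulerMaclaurinTerm_le (n := Y + n) (by omega) hs
    _ = ‖s - 1‖ * (‖s‖ / s.re) * ((Y : ℝ) ^ (-s.re) - ((Y + N : ℕ) : ℝ) ^ (-s.re)) := by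
        rw [← Finset.mul_sum, Finset.sum_range_sub' fun n => ((Y + n : ℕ) : ℝ) ^ (-s.re), add_zero]
    _ ≤ ‖s - 1‖ * (‖s‖ / s.re) * (Y : ℝ) ^ (-s.re) := by
        gcongr
        exact sub_le_self _ (by positivity)

lemma differentiable_eulerMaclaurinTerm {n : ℕ} (hn : n ≠ 0) :
    Differentiable ℂ (eulerMaclaurinTerm n) := by
  have h1 : (n : ℂ) ≠ 0 := Nat.cast_ne_zero.mpr hn
  have h2 : (n + 1 : ℂ) ≠ 0 := Nat.cast_add_one_ne_zero n
  unfold eulerMaclaurinTerm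
  intro s
  exact ((DifferentiableAt.const_cpow (by fun_prop) (Or.inl h1)).sub
    (DifferentiableAt.const_cpow (by fun_prop) (Or.inl h2))).sub
    (DifferentiableAt.mul (by fun_prop) (DifferentiableAt.const_cpow (by fun_prop) (Or.inl h2)))

lemma isOpen_setOf_lt_re (a : ℝ) : IsOpen {s : ℂ | a < s.re} :=
  isOpen_lt continuous_const continuous_re

lemma differentiableOn_tsum_eulerMaclaurinTerm {Y : ℕ} (hY : 1 ≤ Y) :
    DifferentiableOn ℂ (fun s => ∑' n, eulerMaclaurinTerm (Y + n) s) {s : ℂ | 0 < s.re} := by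
  intro s₀ (hs₀ : 0 < s₀.re)
  let U : Set ℂ := {s : ℂ | s₀.re / 2 < s.re} ∩ Metric.ball 0 (‖s₀‖ + 1)
  have hU : IsOpen U := (isOpen_setOf_lt_re _).inter Metric.isOpen_ball
  have hmem : s₀ ∈ U := ⟨half_lt_self hs₀, by simp⟩
  have hsum := (summable_natCast_add_rpow (p := -(s₀.re / 2) - 1) (by linarith) Y).mul_left
    ((‖s₀‖ + 2) * (‖s₀‖ + 1))
  refine ((differentiableOn_tsum_of_summable_norm hsum
    (fun n => (differentiable_eulerMaclaurinTerm (by omega)).differentiableOn) hU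
    fun n s hs => ?_).differentiableAt (hU.mem_nhds hmem)).differentiableWithinAt
  have hnorm : ‖s‖ ≤ ‖s₀‖ + 1 := (mem_ball_zero_iff.mp hs.2).le
  have hnorm' : ‖s - 1‖ ≤ ‖s₀‖ + 2 := (norm_sub_le s 1).trans (by rw [norm_one]; linarith)
  refine (norm_eulerMaclaurinTerm_le_rpow (by omega) (by linarith) (le_of_lt hs.1)).trans ?_
  gcongr

lemma tendsto_sum_Icc_cpow_neg {s : ℂ} (hs : 1 < s.re) :
    Tendsto (fun N : ℕ => ∑ n ∈ Finset.Icc 1 N, (n : ℂ) ^ (-s)) atTop (𝓝 (riemannZeta s)) := by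
  have hsum : Summable fun n : ℕ => 1 / (n + 1 : ℂ) ^ s := by
    simpa using (summable_nat_add_iff 1).mpr (summable_one_div_nat_cpow.mpr hs)
  rw [zeta_eq_tsum_one_div_nat_add_one_cpow hs]
  refine hsum.hasSum.tendsto_sum_nat.congr fun N => ?_
  rw [← Finset.Ico_add_one_right_eq_Icc, Finset.sum_Ico_eq_sum_range, Nat.add_sub_cancel]
  exact Finset.sum_congr rfl fun n _ => by push_cast; rw [cpow_neg, one_div, add_comm]

lemma sum_range_eulerMaclaurinTerm (Y N : ℕ) (s : ℂ) :
    ∑ n ∈ Finset.range N, eulerMaclaurinTerm (Y + n) s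
      = (Y : ℂ) ^ (1 - s) - ((Y + N : ℕ) : ℂ) ^ (1 - s) - (s - 1) *
        (∑ n ∈ Finset.Icc 1 (Y + N), (n : ℂ) ^ (-s) - ∑ n ∈ Finset.Icc 1 Y, (n : ℂ) ^ (-s)) := by
  induction N with
  | zero => simp
  | succ N ih =>
    rw [Finset.sum_range_succ, ih, ← add_assoc, Finset.sum_Icc_succ_top (by omega),
      eulerMaclaurinTerm]
    push_cast
    ring

lemma riemannZeta₁_eq_mul {s : ℂ} (hs : s ≠ 1) : riemannZeta₁ s = (s - 1) * riemannZeta s := by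
  rw [riemannZeta_eq_inv_sub_mul hs, mul_inv_cancel_left₀ (sub_ne_zero.mpr hs)]

lemma riemannZeta₁_eq_of_one_lt_re {Y : ℕ} (hY : 1 ≤ Y) {s : ℂ} (hs : 1 < s.re) :
    riemannZeta₁ s = (s - 1) * ∑ n ∈ Finset.Icc 1 Y, (n : ℂ) ^ (-s) + (Y : ℂ) ^ (1 - s)
      - ∑' n, eulerMaclaurinTerm (Y + n) s := by
  have hatTop : Tendsto (fun N => Y + N) atTop atTop :=
    tendsto_atTop_mono (fun N => Nat.le_add_left N Y) tendsto_id
  have hpow : Tendsto (fun N : ℕ => ((Y + N : ℕ) : ℂ) ^ (1 - s)) atTop (𝓝 0) := by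
    rw [tendsto_zero_iff_norm_tendsto_zero]
    refine ((tendsto_rpow_neg_atTop (sub_pos.mpr hs)).comp
      (tendsto_natCast_atTop_atTop.comp hatTop)).congr fun N => ?_
    rw [norm_natCast_cpow_of_pos (by omega), sub_re, one_re, Function.comp, neg_sub,
      Function.comp]
  have hlim := (hpow.const_sub ((Y : ℂ) ^ (1 - s))).sub
    ((((tendsto_sum_Icc_cpow_neg hs).comp hatTop).sub_const
      (∑ n ∈ Finset.Icc 1 Y, (n : ℂ) ^ (-s))).const_mul (s - 1))
  have htsum := tendsto_nhds_unique
    (summable_eulerMaclaurinTerm hY (by linarith)).hasSum.tendsto_sum_nat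
    (hlim.congr fun N => (sum_range_eulerMaclaurinTerm Y N s).symm)
  rw [htsum, riemannZeta₁_eq_mul (by rintro rfl; simp at hs)]
  ring

lemma riemannZeta₁_eq_of_re_pos {Y : ℕ} (hY : 1 ≤ Y) {s : ℂ} (hs : 0 < s.re) :
    riemannZeta₁ s = (s - 1) * ∑ n ∈ Finset.Icc 1 Y, (n : ℂ) ^ (-s) + (Y : ℂ) ^ (1 - s)
      - ∑' n, eulerMaclaurinTerm (Y + n) s := by
  have hopen := isOpen_setOf_lt_re 0
  have hpow {n : ℕ} (hn : 1 ≤ n) (c : ℂ → ℂ) (hc : Differentiable ℂ c) :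
      Differentiable ℂ fun s => (n : ℂ) ^ c s := fun z =>
    (hc z).const_cpow (Or.inl (Nat.cast_ne_zero.mpr (by omega)))
  have hdiff : DifferentiableOn ℂ (fun s : ℂ => (s - 1) * ∑ n ∈ Finset.Icc 1 Y, (n : ℂ) ^ (-s)
      + (Y : ℂ) ^ (1 - s) - ∑' n, eulerMaclaurinTerm (Y + n) s) {s : ℂ | 0 < s.re} := by
    refine DifferentiableOn.sub (Differentiable.differentiableOn ?_)
      (differentiableOn_tsum_eulerMaclaurinTerm hY)
    refine Differentiable.add (Differentiable.mul (by fun_prop) (Differentiable.fun_sum ?_))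
      (hpow hY _ (by fun_prop))
    exact fun n hn => hpow (Finset.mem_Icc.mp hn).1 _ (by fun_prop)
  have heq : ∀ᶠ z in 𝓝 (2 : ℂ), riemannZeta₁ z =
      (z - 1) * ∑ n ∈ Finset.Icc 1 Y, (n : ℂ) ^ (-z) + (Y : ℂ) ^ (1 - z)
        - ∑' n, eulerMaclaurinTerm (Y + n) z :=
    ((isOpen_setOf_lt_re 1).eventually_mem (by simp : (2 : ℂ) ∈ {s : ℂ | 1 < s.re})).mono
      fun z hz => riemannZeta₁_eq_of_one_lt_re hY hz
  exact (differentiable_riemannZeta₁.differentiableOn.analyticOnNhd hopen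
    |>.eqOn_of_preconnected_of_eventuallyEq (hdiff.analyticOnNhd hopen)
      (convex_halfSpace_re_gt 0).isPreconnected (by simp) heq) hs

lemma norm_riemannZeta_sub_sum_sub_le {Y : ℕ} (hY : 1 ≤ Y) {s : ℂ} (hs : 0 < s.re) (hs1 : s ≠ 1) :
    ‖riemannZeta s - ∑ n ∈ Finset.Icc 1 Y, (n : ℂ) ^ (-s) - (Y : ℂ) ^ (1 - s) / (s - 1)‖
      ≤ ‖s‖ / s.re * (Y : ℝ) ^ (-s.re) := by
  have hs1' : s - 1 ≠ 0 := sub_ne_zero.mpr hs1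
  have herror : riemannZeta s - ∑ n ∈ Finset.Icc 1 Y, (n : ℂ) ^ (-s)
      - (Y : ℂ) ^ (1 - s) / (s - 1) = -((∑' n, eulerMaclaurinTerm (Y + n) s) / (s - 1)) := by
    rw [riemannZeta_eq_inv_sub_mul hs1, riemannZeta₁_eq_of_re_pos hY hs]
    field_simp
    ring
  rw [herror, norm_neg, norm_div, div_le_iff₀' (norm_pos_iff.mpr hs1'), ← mul_assoc]
  exact norm_tsum_eulerMaclaurinTerm_le hY hs

lemma norm_riemannZeta₀_sub_one_le {s : ℂ} (hs : 0 < s.re) (hs1 : s ≠ 1) :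
    ‖riemannZeta₀ s - 1‖ ≤ ‖s‖ / s.re := by
  have h := norm_riemannZeta_sub_sum_sub_le le_rfl hs hs1
  rw [riemannZeta_eq_inv_sub_add hs1] at h
  calc ‖riemannZeta₀ s - 1‖ = ‖(s - 1)⁻¹ + riemannZeta₀ s - 1 - (s - 1)⁻¹‖ := by ring_nf
    _ ≤ ‖s‖ / s.re := by simpa using h

lemma norm_riemannZeta₀_le {s : ℂ} (hs : 0 < s.re) (hs1 : s ≠ 1) :
    ‖riemannZeta₀ s‖ ≤ 1 + ‖s‖ / s.re := by
  have h := norm_add_le 1 (riemannZeta₀ s - 1)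
  rw [add_sub_cancel, norm_one] at h
  linarith [norm_riemannZeta₀_sub_one_le hs hs1]

lemma riemannZeta₀_re_nonneg {σ : ℝ} (hσ : 1 < σ) : 0 ≤ (riemannZeta₀ σ).re := by
  have h : |(riemannZeta₀ σ - 1).re| ≤ ‖(σ : ℂ)‖ / (σ : ℂ).re :=
    (abs_re_le_norm _).trans (norm_riemannZeta₀_sub_one_le (by simp; linarith)
      (ofReal_ne_one.mpr hσ.ne'))
  rw [norm_real, ofReal_re, Real.norm_of_nonneg (by linarith), div_self (by linarith), sub_re,
    one_re] at h
  linarith [(abs_le.mp h).1]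

lemma norm_riemannZeta₁_le {s : ℂ} (hs : 0 < s.re) :
    ‖riemannZeta₁ s‖ ≤ 1 + ‖s - 1‖ * (1 + ‖s‖ / s.re) := by
  rcases eq_or_ne s 1 with rfl | hs1
  · simp
  · refine (norm_add_le _ _).trans ?_
    rw [norm_one, norm_mul]
    gcongr
    exact norm_riemannZeta₀_le hs hs1

lemma re_le_norm_sub_one_of_riemannZeta_eq_zero {s : ℂ} (hs : 0 < s.re) (hs1 : s ≠ 1)
    (hζ : riemannZeta s = 0) : s.re ≤ ‖s - 1‖ := by
  have hs1' : s - 1 ≠ 0 := sub_ne_zero.mpr hs1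
  have hs0 : 0 < ‖s‖ := norm_pos_iff.mpr (by rintro rfl; simp at hs)
  have h := norm_riemannZeta₀_sub_one_le hs hs1
  rw [riemannZeta_eq_inv_sub_add hs1, add_eq_zero_iff_neg_eq] at hζ
  rw [← hζ, show -(s - 1)⁻¹ - 1 = -(s / (s - 1)) by field_simp; ring, norm_neg, norm_div] at h
  exact (div_le_div_iff_of_pos_left hs0 (norm_pos_iff.mpr hs1') hs).mp h

lemma tsum_one_div_nat_rpow_le {σ : ℝ} (hσ : 1 < σ) :
    ∑' n : ℕ, 1 / (n : ℝ) ^ σ ≤ σ / (σ - 1) := by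
  have h := ZetaAsymptotics.zeta_limit_aux1 hσ
  have hterm : 0 ≤ ZetaAsymptotics.termTSum σ :=
    tsum_nonneg fun n => ZetaAsymptotics.term_nonneg _ _
  have hσ' : σ / (σ - 1) = 1 + 1 / (σ - 1) := by
    rw [one_add_div (sub_ne_zero.mpr hσ.ne'), sub_add_cancel]
  rw [(Real.summable_one_div_nat_rpow.mpr hσ).tsum_eq_zero_add, hσ']
  push_cast
  rw [Real.zero_rpow (by linarith), div_zero, zero_add]
  nlinarith

lemma norm_LSeries_le_of_norm_le_one {f : ℕ → ℂ} (hf : ∀ n, ‖f n‖ ≤ 1) {s : ℂ} (hs : 1 < s.re) :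
    ‖LSeries f s‖ ≤ s.re / (s.re - 1) := by
  refine (tsum_of_norm_bounded (Real.summable_one_div_nat_rpow.mpr hs).hasSum fun n => ?_).trans
    (tsum_one_div_nat_rpow_le hs)
  rw [LSeries.norm_term_eq]
  split_ifs
  · positivity
  · gcongr
    exact hf n

lemma le_norm_riemannZeta {s : ℂ} (hs : 1 < s.re) : (s.re - 1) / s.re ≤ ‖riemannZeta s‖ := by
  have hmul := ArithmeticFunction.LSeries_zeta_mul_Lseries_moebius hs
  rw [ArithmeticFunction.LSeries_zeta_eq_riemannZeta hs] at hmul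
  have hmoebius := norm_LSeries_le_of_norm_le_one
    (f := fun n => ((ArithmeticFunction.moebius n : ℤ) : ℂ)) (fun n => by
      rw [norm_intCast]
      exact_mod_cast ArithmeticFunction.abs_moebius_le_one) hs
  have hone : 1 ≤ ‖riemannZeta s‖ * (s.re / (s.re - 1)) := by
    calc (1 : ℝ) = ‖riemannZeta s‖ *
          ‖LSeries (fun n => ((ArithmeticFunction.moebius n : ℤ) : ℂ)) s‖ := by
          rw [← norm_mul, hmul, norm_one]
      _ ≤ ‖riemannZeta s‖ * (s.re / (s.re - 1)) := by gcongr
  rw [← inv_div, inv_le_iff_one_le_mul₀' (div_pos (by linarith) (by linarith))]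
  rwa [mul_comm]

lemma sum_Icc_rpow_sub_one_le (Y : ℕ) {v : ℝ} (hv : 0 < v) (hv1 : v ≤ 1) :
    ∑ n ∈ Finset.Icc 1 Y, (n : ℝ) ^ (v - 1) ≤ (Y : ℝ) ^ v / v := by
  induction Y with
  | zero => simpa using div_nonneg (Real.rpow_nonneg le_rfl v) hv.le
  | succ Y ih =>
    set z : ℝ := ((Y + 1 : ℕ) : ℝ) with hz
    have hz1 : 1 ≤ z := by simp [hz]
    have hz0 : 0 < z := by linarith
    have hbernoulli : (1 + -1 / z) ^ v ≤ 1 + v * (-1 / z) :=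
      rpow_one_add_le_one_add_mul_self (by rw [le_div_iff₀ hz0]; linarith) hv.le hv1
    have hstep : (Y : ℝ) ^ v ≤ z ^ v * (1 + v * (-1 / z)) := by
      have hY : (Y : ℝ) = z * (1 + -1 / z) := by rw [hz]; field_simp; push_cast; ring
      have hnonneg : 0 ≤ 1 + -1 / z := by
        rw [neg_div, ← sub_eq_add_neg, sub_nonneg, div_le_one₀ hz0]
        exact hz1
      rw [hY, Real.mul_rpow hz0.le hnonneg]
      gcongr
    rw [Finset.sum_Icc_succ_top (by omega), ← hz, Real.rpow_sub_one hz0.ne']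
    calc _ ≤ (Y : ℝ) ^ v / v + z ^ v / z := by gcongr
      _ ≤ z ^ v * (1 + v * (-1 / z)) / v + z ^ v / z := by gcongr
      _ = z ^ v / v := by field_simp; ring

lemma norm_sum_Icc_cpow_neg_le (Y : ℕ) {s : ℂ} {v : ℝ} (hv : 0 < v) (hv1 : v ≤ 1)
    (hs : 1 - v ≤ s.re) : ‖∑ n ∈ Finset.Icc 1 Y, (n : ℂ) ^ (-s)‖ ≤ (Y : ℝ) ^ v / v := by
  refine (norm_sum_le_of_le _ fun n hn => ?_).trans (sum_Icc_rpow_sub_one_le Y hv hv1)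
  have hn1 := (Finset.mem_Icc.mp hn).1
  rw [norm_natCast_cpow_of_pos hn1, neg_re]
  exact Real.rpow_le_rpow_of_exponent_le (Nat.one_le_cast.mpr hn1) (by linarith)

lemma norm_riemannZeta_le_rpow {Y : ℕ} (hY : 1 ≤ Y) {s : ℂ} {v : ℝ} (hv : 0 < v) (hv1 : v < 1)
    (hs : 1 - v ≤ s.re) (hsv : v ≤ ‖s - 1‖) (hsY : ‖s‖ ≤ Y) :
    ‖riemannZeta s‖ ≤ (Y : ℝ) ^ v * (2 / v + 1 / (1 - v)) := by
  have hY1 : (1 : ℝ) ≤ Y := Nat.one_le_cast.mpr hY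
  have hv1' : 0 < 1 - v := sub_pos.mpr hv1
  have hs1 : s ≠ 1 := by rintro rfl; simp at hsv; linarith
  have hpole : ‖(Y : ℂ) ^ (1 - s) / (s - 1)‖ ≤ (Y : ℝ) ^ v / v := by
    rw [norm_div, norm_natCast_cpow_of_pos hY, sub_re, one_re]
    gcongr
    linarith
  have herror : ‖s‖ / s.re * (Y : ℝ) ^ (-s.re) ≤ (Y : ℝ) ^ v * (1 / (1 - v)) := by
    calc ‖s‖ / s.re * (Y : ℝ) ^ (-s.re) ≤ Y / (1 - v) * (Y : ℝ) ^ (v - 1) := by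
          gcongr
          linarith
      _ = (Y : ℝ) ^ v * (1 / (1 - v)) := by
          rw [Real.rpow_sub_one (by positivity)]
          field_simp
  have htriangle := norm_add₃_le (a := riemannZeta s - ∑ n ∈ Finset.Icc 1 Y, (n : ℂ) ^ (-s)
    - (Y : ℂ) ^ (1 - s) / (s - 1)) (b := ∑ n ∈ Finset.Icc 1 Y, (n : ℂ) ^ (-s))
    (c := (Y : ℂ) ^ (1 - s) / (s - 1))
  calc ‖riemannZeta s‖ ≤ ‖s‖ / s.re * (Y : ℝ) ^ (-s.re) + (Y : ℝ) ^ v / v + (Y : ℝ) ^ v / v := by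
        rw [show riemannZeta s = riemannZeta s - ∑ n ∈ Finset.Icc 1 Y, (n : ℂ) ^ (-s)
          - (Y : ℂ) ^ (1 - s) / (s - 1) + ∑ n ∈ Finset.Icc 1 Y, (n : ℂ) ^ (-s)
          + (Y : ℂ) ^ (1 - s) / (s - 1) by ring]
        linarith [norm_riemannZeta_sub_sum_sub_le hY (hv1'.trans_le hs) hs1,
          norm_sum_Icc_cpow_neg_le Y hv hv1.le hs]
    _ ≤ (Y : ℝ) ^ v * (1 / (1 - v)) + (Y : ℝ) ^ v / v + (Y : ℝ) ^ v / v := by gcongr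
    _ = (Y : ℝ) ^ v * (2 / v + 1 / (1 - v)) := by ring

lemma one_le_riemannZeta₁_re {σ : ℝ} (hσ : 1 < σ) : 1 ≤ (riemannZeta₁ σ).re := by
  have h := mul_nonneg (sub_pos.mpr hσ).le (riemannZeta₀_re_nonneg hσ)
  rw [riemannZeta₁, ← ofReal_one, ← ofReal_sub, add_re, re_ofReal_mul, ofReal_re]
  linarith

lemma riemannZeta₁_im_eq_zero {σ : ℝ} (hσ : 1 < σ) : (riemannZeta₁ σ).im = 0 := by
  have hconj : (starRingEnd ℂ) (riemannZeta σ) = riemannZeta σ := by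
    rw [← riemannZeta_conj, conj_ofReal]
  rw [riemannZeta₁_eq_mul (ofReal_ne_one.mpr hσ.ne'), ← ofReal_one, ← ofReal_sub, im_ofReal_mul,
    conj_eq_iff_im.mp hconj, mul_zero]

lemma norm_deriv_riemannZeta₀_le {σ : ℝ} (hσ : 1 < σ) (hσ' : σ ≤ 1.1) :
    ‖deriv riemannZeta₀ σ‖ ≤ 8.4 := by
  refine (norm_deriv_le_of_forall_mem_sphere_norm_le (C := 4.2) one_half_pos
    differentiable_riemannZeta₀.diffContOnCl fun z hz => ?_).trans (by norm_num)
  rw [mem_sphere_iff_norm] at hz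
  have hre : |z.re - σ| ≤ 1 / 2 := by simpa [hz] using abs_re_le_norm (z - σ)
  have hre' := (abs_le.mp hre).1
  have hnorm : ‖z‖ ≤ σ + 1 / 2 := by
    have h := norm_add_le (z - σ) σ
    rw [hz, norm_real, Real.norm_of_nonneg (by linarith), sub_add_cancel] at h
    linarith
  have hz1 : z ≠ 1 := by
    rintro rfl
    rw [← ofReal_one, ← ofReal_sub, norm_real, Real.norm_eq_abs, abs_of_neg (by linarith)] at hz
    linarith
  have hquot : ‖z‖ / z.re ≤ 3.2 := by
    rw [div_le_iff₀ (by linarith)]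
    linarith
  linarith [norm_riemannZeta₀_le (by linarith) hz1]

lemma re_neg_logDeriv_riemannZeta₁_le {σ : ℝ} (hσ : 1 < σ) (hσ' : σ ≤ 1.1) :
    (-logDeriv riemannZeta₁ σ).re ≤ 8.4 * (σ - 1) := by
  have hderiv : deriv riemannZeta₁ σ
      = riemannZeta₀ σ + ((σ - 1 : ℝ) : ℂ) * deriv riemannZeta₀ σ := by
    have h : HasDerivAt riemannZeta₁ _ (σ : ℂ) := (((hasDerivAt_id (σ : ℂ)).sub_const 1).mul
      (differentiable_riemannZeta₀ (σ : ℂ)).hasDerivAt).const_add 1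
    simp [h.deriv]
  have hreal : riemannZeta₁ σ = ((riemannZeta₁ σ).re : ℂ) := by
    apply Complex.ext <;> simp [riemannZeta₁_im_eq_zero hσ]
  have hone := one_le_riemannZeta₁_re hσ
  have hre := (abs_le.mp ((abs_re_le_norm _).trans (norm_deriv_riemannZeta₀_le hσ hσ'))).1
  rw [logDeriv_apply, hreal, hderiv, ← neg_div, div_ofReal_re, div_le_iff₀ (by linarith), neg_re,
    add_re, re_ofReal_mul]
  nlinarith [mul_nonneg (sub_pos.mpr hσ).le (sub_nonneg.mpr hone), riemannZeta₀_re_nonneg hσ]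

end

/-! ### Zeros in a disc and the logarithmic derivative at its centre -/

section

open Complex Metric Topology
open scoped ComplexConjugate Real

lemma logDeriv_eq_deriv_of_eventuallyEq_exp {f h : ℂ → ℂ} {z : ℂ} (hh : DifferentiableAt ℂ h z)
    (hf : f =ᶠ[𝓝 z] fun w => exp (h w)) : logDeriv f z = deriv h z := by
  rw [(logDeriv_congr_nhds hf).eq_of_nhds, logDeriv_apply, hh.hasDerivAt.cexp.deriv]
  exact mul_div_cancel_left₀ _ (exp_ne_zero _)

lemma exists_eqOn_ball_exp {f : ℂ → ℂ} {c : ℂ} {R : ℝ} (hf : DifferentiableOn ℂ f (ball c R))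
    (hne : ∀ z ∈ ball c R, f z ≠ 0) :
    ∃ h : ℂ → ℂ, DifferentiableOn ℂ h (ball c R) ∧ Set.EqOn f (fun z => exp (h z)) (ball c R) := by
  have hlog : DifferentiableOn ℂ (logDeriv f) (ball c R) := (hf.deriv isOpen_ball).div hf hne
  obtain ⟨g, hg⟩ := hlog.isExactOn_ball
  have hgd : DifferentiableOn ℂ g (ball c R) :=
    fun z hz => (hg z hz).differentiableAt.differentiableWithinAt
  obtain ⟨a, ha, hfa⟩ : ∃ a : ℂ, a ≠ 0 ∧ Set.EqOn f (a • fun z => exp (g z)) (ball c R) := by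
    refine (logDeriv_eqOn_iff hf hgd.cexp isOpen_ball (convex_ball c R).isPreconnected
      (fun z _ => exp_ne_zero _) hne).mp fun z hz => ?_
    rw [logDeriv_eq_deriv_of_eventuallyEq_exp (hg z hz).differentiableAt .rfl, (hg z hz).deriv]
  refine ⟨fun z => log a + g z, hgd.const_add _, fun z hz => ?_⟩
  simp only [hfa hz, exp_add, exp_log ha, Pi.smul_apply, smul_eq_mul]

/-- The first cosine Fourier coefficient of `log ‖f‖` on the circle of radius `r` around `0`,
without the normalising factor `1 / π`. -/
noncomputable def logCosCoeff (f : ℂ → ℂ) (r : ℝ) : ℝ :=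
  ∫ θ in (0 : ℝ)..2 * π, Real.log ‖f (circleMap 0 r θ)‖ * Real.cos θ

lemma continuous_comp_circleMap {h : ℂ → ℂ} {r : ℝ} (hr : 0 < r)
    (hh : DiffContOnCl ℂ h (ball 0 r)) : Continuous fun θ : ℝ => h (circleMap 0 r θ) := by
  refine hh.continuousOn.comp_continuous (continuous_circleMap 0 r) fun θ => ?_
  rw [closure_ball _ hr.ne']
  exact circleMap_mem_closedBall 0 hr.le θ

lemma integral_circleMap_mul_exp {h : ℂ → ℂ} {r : ℝ} (hr : 0 < r)
    (hh : DiffContOnCl ℂ h (ball 0 r)) :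
    ∫ θ in (0 : ℝ)..2 * π, h (circleMap 0 r θ) * exp (θ * I) = 0 := by
  have hzero : (∮ z in C(0, r), h z) = 0 := hh.circleIntegral_eq_zero hr.le
  have hparam (θ : ℝ) : deriv (circleMap 0 r) θ • h (circleMap 0 r θ)
      = (r * I) * (h (circleMap 0 r θ) * exp (θ * I)) := by
    simp only [deriv_circleMap, circleMap_zero, smul_eq_mul]
    ring
  have hrI : (r : ℂ) * I ≠ 0 := mul_ne_zero (ofReal_ne_zero.mpr hr.ne') I_ne_zero
  simp_rw [circleIntegral, hparam, intervalIntegral.integral_const_mul] at hzero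
  exact (mul_eq_zero.mp hzero).resolve_left hrI

lemma integral_circleMap_mul_exp_neg {h : ℂ → ℂ} {r : ℝ} (hr : 0 < r)
    (hh : DiffContOnCl ℂ h (ball 0 r)) :
    ∫ θ in (0 : ℝ)..2 * π, h (circleMap 0 r θ) * exp (-(θ * I)) = 2 * π * r * deriv h 0 := by
  have hcauchy := hh.deriv_eq_smul_circleIntegral hr
  have hr0 : (r : ℂ) ≠ 0 := ofReal_ne_zero.mpr hr.ne'
  have hparam (θ : ℝ) : deriv (circleMap 0 r) θ •
      (1 / (circleMap 0 r θ - 0) ^ 2) • h (circleMap 0 r θ)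
        = (I / r) * (h (circleMap 0 r θ) * exp (-(θ * I))) := by
    have := exp_ne_zero (θ * I)
    simp only [exp_neg, deriv_circleMap, circleMap_zero, sub_zero, smul_eq_mul]
    field_simp
  simp_rw [circleIntegral, hparam, intervalIntegral.integral_const_mul, smul_eq_mul] at hcauchy
  refine mul_left_cancel₀ (div_ne_zero I_ne_zero hr0) (hcauchy.trans ?_)
  field_simp

lemma integral_circleMap_mul_cos {h : ℂ → ℂ} {r : ℝ} (hr : 0 < r)
    (hh : DiffContOnCl ℂ h (ball 0 r)) :
    ∫ θ in (0 : ℝ)..2 * π, h (circleMap 0 r θ) * cos θ = π * r * deriv h 0 := by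
  have hcont := continuous_comp_circleMap hr hh
  have hint {e : ℝ → ℂ} (he : Continuous e) : IntervalIntegrable
      (fun θ : ℝ => h (circleMap 0 r θ) * e θ) MeasureTheory.volume 0 (2 * π) :=
    (hcont.mul he).intervalIntegrable _ _
  have heuler (θ : ℝ) : h (circleMap 0 r θ) * cos θ
      = (1 / 2) * (h (circleMap 0 r θ) * exp (θ * I) + h (circleMap 0 r θ) * exp (-(θ * I))) := by
    rw [cos]
    ring_nf
  simp_rw [heuler]
  rw [intervalIntegral.integral_const_mul,
    intervalIntegral.integral_add (hint (by fun_prop)) (hint (by fun_prop)),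
    integral_circleMap_mul_exp hr hh, integral_circleMap_mul_exp_neg hr hh]
  ring

lemma logCosCoeff_exp {h : ℂ → ℂ} {r : ℝ} (hr : 0 < r) (hh : DiffContOnCl ℂ h (ball 0 r)) :
    logCosCoeff (fun z => exp (h z)) r = π * r * (deriv h 0).re := by
  have hint : IntervalIntegrable (fun θ : ℝ => h (circleMap 0 r θ) * cos θ)
    MeasureTheory.volume 0 (2 * π) := 
    ((continuous_comp_circleMap hr hh).mul (by fun_prop)).intervalIntegrable _ _
  have hre : (π * r * deriv h 0 : ℂ).re = π * r * (deriv h 0).re := by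
    rw [← ofReal_mul, re_ofReal_mul]
  rw [logCosCoeff, ← hre, ← integral_circleMap_mul_cos hr hh, ← reCLM_apply,
    ← ContinuousLinearMap.intervalIntegral_comp_comm _ hint]
  congr 1
  funext θ
  rw [norm_exp, Real.log_exp, reCLM_apply, ← ofReal_cos, re_mul_ofReal]

lemma logCosCoeff_congr {f g : ℂ → ℂ} {r : ℝ} (hr : 0 ≤ r)
    (h : ∀ z ∈ sphere (0 : ℂ) r, ‖f z‖ = ‖g z‖) : logCosCoeff f r = logCosCoeff g r := by
  unfold logCosCoeff
  congr 1
  funext θ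
  rw [h _ (circleMap_mem_sphere 0 hr θ)]

lemma exists_ball_ne_zero_of_closedBall_ne_zero {f : ℂ → ℂ} {r R : ℝ} (hr : 0 ≤ r) (hrR : r < R)
    (hf : ContinuousOn f (ball 0 R)) (hne : ∀ z ∈ closedBall (0 : ℂ) r, f z ≠ 0) :
    ∃ R', r < R' ∧ R' ≤ R ∧ ∀ z ∈ ball (0 : ℂ) R', f z ≠ 0 := by
  have hopen : IsOpen (ball (0 : ℂ) R ∩ f ⁻¹' {0}ᶜ) :=
    hf.isOpen_inter_preimage isOpen_ball isOpen_compl_singleton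
  have hsub : closedBall (0 : ℂ) r ⊆ ball (0 : ℂ) R ∩ f ⁻¹' {0}ᶜ :=
    fun z hz => ⟨closedBall_subset_ball hrR hz, hne z hz⟩
  obtain ⟨δ, hδ, hth⟩ := (isCompact_closedBall (0 : ℂ) r).exists_thickening_subset_open hopen hsub
  rw [thickening_closedBall hδ hr] at hth
  exact ⟨min (δ + r) R, lt_min (by linarith) hrR, min_le_right _ _,
    fun z hz => (hth (ball_subset_ball (min_le_left _ _) hz)).2⟩

lemma logCosCoeff_eq_of_ne_zero {f : ℂ → ℂ} {r R : ℝ} (hr : 0 < r) (hrR : r < R)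
    (hf : DifferentiableOn ℂ f (ball 0 R)) (hne : ∀ z ∈ closedBall (0 : ℂ) r, f z ≠ 0) :
    logCosCoeff f r = π * r * (logDeriv f 0).re := by
  obtain ⟨R', hrR', hR'R, hne'⟩ :=
    exists_ball_ne_zero_of_closedBall_ne_zero hr.le hrR hf.continuousOn hne
  obtain ⟨h, hh, hexp⟩ := exists_eqOn_ball_exp (hf.mono (ball_subset_ball hR'R)) hne'
  have hsub : closedBall (0 : ℂ) r ⊆ ball 0 R' := closedBall_subset_ball hrR'
  have hmem : ball (0 : ℂ) R' ∈ 𝓝 0 := ball_mem_nhds 0 (hr.trans hrR')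
  rw [logDeriv_eq_deriv_of_eventuallyEq_exp (hh.differentiableAt hmem)
      (hexp.eventuallyEq_of_mem hmem),
    ← logCosCoeff_exp hr ((hh.mono hsub).diffContOnCl_ball le_rfl)]
  exact logCosCoeff_congr hr.le fun z hz => by rw [hexp (hsub (sphere_subset_closedBall hz))]

lemma exists_eq_sub_pow_mul {f : ℂ → ℂ} {U : Set ℂ} (hU : IsOpen U) (hf : DifferentiableOn ℂ f U)
    {u : ℂ} (hu : u ∈ U) (hfu : ¬ ∀ᶠ z in 𝓝 u, f z = 0) :
    ∃ (n : ℕ) (g : ℂ → ℂ), DifferentiableOn ℂ g U ∧ g u ≠ 0 ∧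
      ∀ z ∈ U, f z = (z - u) ^ n * g z := by
  classical
  obtain ⟨n, g, hg, hgu, hfg⟩ :=
    (hf.analyticOnNhd hU u hu).exists_eventuallyEq_pow_smul_nonzero_iff.mpr hfu
  refine ⟨n, Function.update (fun z => f z / (z - u) ^ n) u (g u), ?_, by simpa, fun z _ => ?_⟩
  · refine (differentiableOn_compl_singleton_and_continuousAt_iff (hU.mem_nhds hu)).mp ⟨?_, ?_⟩
    · have hquot : DifferentiableOn ℂ (fun z => f z / (z - u) ^ n) (U \ {u}) :=
        (hf.mono Set.sdiff_subset).div (by fun_prop)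
          fun z hz => pow_ne_zero _ (sub_ne_zero.mpr hz.2)
      exact hquot.congr fun z hz => Function.update_of_ne hz.2 _ _
    · refine continuousAt_update_same.mpr (hg.continuousAt.continuousWithinAt.congr' ?_)
      filter_upwards [hfg.filter_mono nhdsWithin_le_nhds, self_mem_nhdsWithin] with z hz hzu
      rw [hz, smul_eq_mul, mul_div_cancel_left₀ _ (pow_ne_zero _ (sub_ne_zero.mpr hzu))]
  · rcases eq_or_ne z u with rfl | hzu
    · simpa using hfg.self_of_nhds
    · simp only [Function.update_of_ne hzu]
      rw [mul_div_cancel₀ _ (pow_ne_zero _ (sub_ne_zero.mpr hzu))]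

/-- The Blaschke factor `canonicalFactor r u` multiplied by `z - u` to remove its pole at `u`. -/
noncomputable def blaschkeNumerator (r : ℝ) (u z : ℂ) : ℂ := (r ^ 2 - conj u * z) / r

lemma differentiable_blaschkeNumerator (r : ℝ) (u : ℂ) :
    Differentiable ℂ (blaschkeNumerator r u) := by
  unfold blaschkeNumerator
  fun_prop

lemma canonicalFactor_eq_blaschkeNumerator_div (r : ℝ) (u z : ℂ) :
    canonicalFactor r u z = blaschkeNumerator r u z / (z - u) := by
  rw [canonicalFactor_apply, blaschkeNumerator, div_div]

lemma blaschkeNumerator_ne_zero {r : ℝ} {u z : ℂ} (hu : u ∈ ball (0 : ℂ) r)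
    (hz : z ∈ closedBall (0 : ℂ) r) : blaschkeNumerator r u z ≠ 0 := by
  rw [mem_ball_zero_iff] at hu
  rw [mem_closedBall_zero_iff] at hz
  have hr : 0 < r := (norm_nonneg u).trans_lt hu
  refine div_ne_zero (fun h => ?_) (ofReal_ne_zero.mpr hr.ne')
  have hnorm := congrArg norm (sub_eq_zero.mp h)
  rw [norm_mul, norm_pow, norm_real, Real.norm_of_nonneg hr.le, RCLike.norm_conj] at hnorm
  nlinarith [norm_nonneg u, norm_nonneg z]

lemma norm_blaschkeNumerator {r : ℝ} {u z : ℂ} (hu : u ∈ ball (0 : ℂ) r)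
    (hz : z ∈ sphere (0 : ℂ) r) : ‖blaschkeNumerator r u z‖ = ‖z - u‖ := by
  have hzu : z ≠ u := by
    rintro rfl
    exact (mem_ball.mp hu).ne (mem_sphere.mp hz)
  have hone := norm_canonicalFactor_eval_circle_eq_one hu hz
  rwa [canonicalFactor_eq_blaschkeNumerator_div, norm_div,
    div_eq_one_iff_eq (norm_ne_zero_iff.mpr (sub_ne_zero.mpr hzu))] at hone

lemma logDeriv_blaschkeNumerator_zero {r : ℝ} (hr : r ≠ 0) (u : ℂ) :
    logDeriv (blaschkeNumerator r u) 0 = -conj u / r ^ 2 := by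
  have hlin := ((hasDerivAt_id (0 : ℂ)).const_mul (conj u)).const_sub ((r : ℂ) ^ 2)
  have hder : HasDerivAt (blaschkeNumerator r u) (-conj u / r) 0 :=
    (hlin.div_const (r : ℂ)).congr_deriv (by simp)
  have hr' : (r : ℂ) ≠ 0 := ofReal_ne_zero.mpr hr
  rw [logDeriv_apply, hder.deriv, blaschkeNumerator]
  field_simp
  simp

lemma logDeriv_pow_mul {b g : ℂ → ℂ} {z : ℂ} {n : ℕ} (hb : DifferentiableAt ℂ b z)
    (hg : DifferentiableAt ℂ g z) (hbz : b z ^ n ≠ 0) (hgz : g z ≠ 0) :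
    logDeriv (fun w => b w ^ n * g w) z = n * logDeriv b z + logDeriv g z := by
  rw [logDeriv_mul z hbz hgz (hb.fun_pow n) hg, logDeriv_fun_pow hb]

lemma re_logDeriv_sub_pow_mul {g : ℂ → ℂ} {r : ℝ} {u : ℂ} {n : ℕ} (hu : u ∈ ball (0 : ℂ) r)
    (hn : (0 - u) ^ n ≠ 0) (hg : DifferentiableAt ℂ g 0) (hg0 : g 0 ≠ 0) :
    (logDeriv (fun z => (z - u) ^ n * g z) 0).re
      = (logDeriv (fun z => blaschkeNumerator r u z ^ n * g z) 0).re
        + n * (u.re / r ^ 2 - u.re / ‖u‖ ^ 2) := by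
  have hr : 0 < r := pos_of_mem_ball hu
  have hlin : logDeriv (fun z => z - u) 0 = -u⁻¹ := by
    simp [logDeriv_apply, div_eq_mul_inv, inv_neg]
  rw [logDeriv_pow_mul (by fun_prop) hg hn hg0,
    logDeriv_pow_mul (differentiable_blaschkeNumerator r u).differentiableAt hg
      (pow_ne_zero n (blaschkeNumerator_ne_zero hu (mem_closedBall_self hr.le))) hg0,
    logDeriv_blaschkeNumerator_zero hr.ne', hlin, ← ofReal_pow, ← ofReal_natCast]
  simp only [add_re, re_ofReal_mul, neg_re, inv_re, div_ofReal_re, conj_re, normSq_eq_norm_sq]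
  ring

/-- Replacing `(z - u) ^ n` by the power of the Blaschke numerator does not change `‖f‖` on the
circle. -/
lemma exists_remove_zero {f : ℂ → ℂ} {r R : ℝ} (hrR : r < R)
    (hf : DifferentiableOn ℂ f (ball 0 R)) (hf0 : f 0 ≠ 0) {u : ℂ} (hu : u ∈ ball (0 : ℂ) r) :
    ∃ (n : ℕ) (f₁ : ℂ → ℂ), DifferentiableOn ℂ f₁ (ball 0 R) ∧ f₁ 0 ≠ 0 ∧ f₁ u ≠ 0 ∧
      (f u = 0 → 1 ≤ n) ∧ (∀ z ∈ closedBall (0 : ℂ) r, f₁ z = 0 → f z = 0) ∧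
      logCosCoeff f₁ r = logCosCoeff f r ∧
      (logDeriv f 0).re = (logDeriv f₁ 0).re + n * (u.re / r ^ 2 - u.re / ‖u‖ ^ 2) := by
  have hr : 0 < r := pos_of_mem_ball hu
  have hsub : closedBall (0 : ℂ) r ⊆ ball 0 R := closedBall_subset_ball hrR
  have huR : u ∈ ball (0 : ℂ) R := hsub (ball_subset_closedBall hu)
  have h0R : (0 : ℂ) ∈ ball (0 : ℂ) R := mem_ball_self (hr.trans hrR)
  obtain ⟨n, g, hg, hgu, hfg⟩ := exists_eq_sub_pow_mul isOpen_ball hf huR fun h =>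
    hf0 ((hf.analyticOnNhd isOpen_ball).eqOn_zero_of_preconnected_of_eventuallyEq_zero
      (convex_ball (0 : ℂ) R).isPreconnected huR h h0R)
  have hpow0 : (0 - u) ^ n ≠ 0 := fun h => hf0 (by rw [hfg 0 h0R, h, zero_mul])
  have hg0 : g 0 ≠ 0 := fun h => hf0 (by rw [hfg 0 h0R, h, mul_zero])
  have hgd : DifferentiableAt ℂ g 0 := hg.differentiableAt (isOpen_ball.mem_nhds h0R)
  have hb := differentiable_blaschkeNumerator r u
  have hbne (z) (hz : z ∈ closedBall (0 : ℂ) r) : blaschkeNumerator r u z ^ n ≠ 0 :=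
    pow_ne_zero n (blaschkeNumerator_ne_zero hu hz)
  have hb0 := hbne 0 (mem_closedBall_self hr.le)
  refine ⟨n, fun z => blaschkeNumerator r u z ^ n * g z, (hb.pow n).differentiableOn.mul hg,
    mul_ne_zero hb0 hg0, mul_ne_zero (hbne u (ball_subset_closedBall hu)) hgu, fun hfu => ?_,
    fun z hz h => ?_, logCosCoeff_congr hr.le fun z hz => ?_, ?_⟩
  · refine Nat.one_le_iff_ne_zero.mpr fun hn => hgu ?_
    simpa [hn, hfu] using (hfg u huR).symm
  · rw [hfg z (hsub hz), (mul_eq_zero.mp h).resolve_left (hbne z hz), mul_zero]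
  · rw [hfg z (hsub (sphere_subset_closedBall hz)), norm_mul, norm_mul, norm_pow, norm_pow,
      norm_blaschkeNumerator hu hz]
  · rw [← re_logDeriv_sub_pow_mul hu hpow0 hgd hg0]
    exact congrArg re (logDeriv_congr_nhds
      (Set.EqOn.eventuallyEq_of_mem hfg (isOpen_ball.mem_nhds h0R))).eq_of_nhds

lemma logCosCoeff_le_of_zeros_subset {r R : ℝ} (hr : 0 < r) (hrR : r < R) (S : Finset ℂ)
    (hS : ∀ u ∈ S, u ∈ ball (0 : ℂ) r ∧ u.re ≤ 0) (f : ℂ → ℂ)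
    (hf : DifferentiableOn ℂ f (ball 0 R)) (hf0 : f 0 ≠ 0)
    (hz : ∀ z ∈ closedBall (0 : ℂ) r, f z = 0 → z ∈ S) :
    logCosCoeff f r ≤ π * r * (logDeriv f 0).re := by
  classical
  induction S using Finset.induction_on generalizing f with
  | empty =>
    refine (logCosCoeff_eq_of_ne_zero hr hrR hf fun z hzr h => ?_).le
    simpa using hz z hzr h
  | insert u S _ ih =>
    obtain ⟨hur, hure⟩ := hS u (Finset.mem_insert_self _ _)
    obtain ⟨n, f₁, hf₁, hf₁0, hf₁u, -, hzero, hcoeff, hlog⟩ := exists_remove_zero hrR hf hf0 hur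
    have hle := ih (fun v hv => hS v (Finset.mem_insert_of_mem hv)) f₁ hf₁ hf₁0 fun z hzr hz0 =>
      (Finset.mem_insert.mp (hz z hzr (hzero z hzr hz0))).resolve_left
        (by rintro rfl; exact hf₁u hz0)
    have hnn : 0 ≤ u.re / r ^ 2 - u.re / ‖u‖ ^ 2 := by
      rcases eq_or_ne u 0 with rfl | hu0
      · simp
      · have := norm_pos_iff.mpr hu0
        have : (-u.re) / r ^ 2 ≤ (-u.re) / ‖u‖ ^ 2 := by
          gcongr
          · linarith
          · exact (mem_ball_zero_iff.mp hur).le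
        rw [neg_div, neg_div] at this
        linarith
    calc logCosCoeff f r = logCosCoeff f₁ r := hcoeff.symm
      _ ≤ π * r * (logDeriv f₁ 0).re := hle
      _ ≤ π * r * (logDeriv f 0).re := by
        rw [hlog]
        gcongr
        exact le_add_of_nonneg_right (by positivity)

lemma finite_zeros_closedBall {f : ℂ → ℂ} {r R : ℝ} (hr : 0 ≤ r) (hrR : r < R)
    (hf : DifferentiableOn ℂ f (ball 0 R)) (hf0 : f 0 ≠ 0) :
    {z | z ∈ closedBall (0 : ℂ) r ∧ f z = 0}.Finite := by
  by_contra hinf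
  obtain ⟨u, hu, hacc⟩ := Set.Infinite.exists_accPt_of_subset_isCompact hinf
    (isCompact_closedBall (0 : ℂ) r) fun z hz => hz.1
  exact hf0 ((hf.analyticOnNhd isOpen_ball).eqOn_zero_of_preconnected_of_frequently_eq_zero
    (convex_ball (0 : ℂ) R).isPreconnected (closedBall_subset_ball hrR hu)
    ((accPt_iff_frequently_nhdsNE.mp hacc).mono fun z hz => hz.2)
    (mem_ball_self (hr.trans_lt hrR)))

lemma exists_radius_ne_zero {f : ℂ → ℂ} {a b R : ℝ} (ha : 0 ≤ a) (hab : a < b) (hbR : b < R)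
    (hf : DifferentiableOn ℂ f (ball 0 R)) (hf0 : f 0 ≠ 0) :
    ∃ r ∈ Set.Ioo a b, ∀ z ∈ sphere (0 : ℂ) r, f z ≠ 0 := by
  have hfin := (finite_zeros_closedBall (ha.trans hab.le) hbR hf hf0).image norm
  obtain ⟨r, hr, hr'⟩ := (Set.Ioo_infinite hab).exists_notMem_finite hfin
  refine ⟨r, hr, fun z hz h => hr' ⟨z, ⟨?_, h⟩, mem_sphere_zero_iff_norm.mp hz⟩⟩
  exact closedBall_subset_closedBall hr.2.le (sphere_subset_closedBall hz)

lemma logCosCoeff_le {f : ℂ → ℂ} {r R : ℝ} (hr : 0 < r) (hrR : r < R)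
    (hf : DifferentiableOn ℂ f (ball 0 R)) (hf0 : f 0 ≠ 0)
    (hz : ∀ z ∈ closedBall (0 : ℂ) r, f z = 0 → ‖z‖ < r ∧ z.re ≤ 0) :
    logCosCoeff f r ≤ π * r * (logDeriv f 0).re := by
  have hfin := finite_zeros_closedBall hr.le hrR hf hf0
  refine logCosCoeff_le_of_zeros_subset hr hrR hfin.toFinset (fun u hu => ?_) f hf hf0
    fun z hzr hz0 => hfin.mem_toFinset.mpr ⟨hzr, hz0⟩
  obtain ⟨hur, hu0⟩ := hfin.mem_toFinset.mp hu
  rw [mem_ball_zero_iff]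
  exact hz u hur hu0

lemma logCosCoeff_add_le_of_eq_zero {f : ℂ → ℂ} {r R : ℝ} (hrR : r < R)
    (hf : DifferentiableOn ℂ f (ball 0 R)) (hf0 : f 0 ≠ 0)
    (hz : ∀ z ∈ closedBall (0 : ℂ) r, f z = 0 → ‖z‖ < r ∧ z.re ≤ 0)
    {d : ℝ} (hd : 0 < d) (hdr : d < r) (hfd : f (-d) = 0) :
    logCosCoeff f r + π * r * (1 / d - d / r ^ 2) ≤ π * r * (logDeriv f 0).re := by
  have hr : 0 < r := hd.trans hdr
  have hu : (-d : ℂ) ∈ ball (0 : ℂ) r := by simp [abs_of_pos hd, hdr]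
  obtain ⟨n, f₁, hf₁, hf₁0, -, hn, hzero, hcoeff, hlog⟩ := exists_remove_zero hrR hf hf0 hu
  have hle := logCosCoeff_le hr hrR hf₁ hf₁0 fun z hzr h => hz z hzr (hzero z hzr h)
  have hterm : (-d : ℂ).re / r ^ 2 - (-d : ℂ).re / ‖(-d : ℂ)‖ ^ 2 = 1 / d - d / r ^ 2 := by
    simp only [neg_re, ofReal_re, norm_neg, norm_real, Real.norm_of_nonneg hd.le]
    field_simp
    ring
  have hnn : 0 ≤ 1 / d - d / r ^ 2 := by
    rw [sub_nonneg, div_le_div_iff₀ (by positivity) hd]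
    nlinarith
  have hmul : 1 / d - d / r ^ 2 ≤ n * (1 / d - d / r ^ 2) :=
    le_mul_of_one_le_left hnn (by exact_mod_cast hn hfd)
  rw [← hcoeff, hlog, hterm, mul_add]
  gcongr

end

/-! ### The zero-free region -/

section

open Complex Metric Topology
open scoped Real ArithmeticFunction.vonMangoldt

/-- This is `(1 + cos θ) (1 + 2 cos θ) ^ 2 ≥ 0` for `w = exp (θ I)`. -/
lemma re_five_add_eight_mul_add_nonneg {w : ℂ} (hw : ‖w‖ = 1) :
    0 ≤ (5 + 8 * w + 4 * w ^ 2 + w ^ 3).re := by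
  have him : w.im ^ 2 = 1 - w.re ^ 2 := by
    have := Complex.sq_norm w
    rw [hw, normSq_apply] at this
    linarith
  have hfactor : (5 + 8 * w + 4 * w ^ 2 + w ^ 3).re = (1 + w.re) * (1 + 2 * w.re) ^ 2 := by
    simp only [pow_succ, pow_zero, one_mul, add_re, mul_re, mul_im, re_ofNat, im_ofNat]
    ring_nf
    rw [him]
    ring
  have hre : -‖w‖ ≤ w.re := (abs_le.mp (abs_re_le_norm w)).1
  have : 0 ≤ 1 + w.re := by linarith
  rw [hfactor]
  positivity

lemma hasSum_re_term_vonMangoldt {s : ℂ} (hs : 1 < s.re) :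
    HasSum (fun n => (LSeries.term (fun m : ℕ => (Λ m : ℂ)) s n).re)
      (-(logDeriv riemannZeta s).re) := by
  have h := (ArithmeticFunction.LSeriesSummable_vonMangoldt hs).LSeriesHasSum
  rw [ArithmeticFunction.LSeries_vonMangoldt_eq_deriv_riemannZeta_div hs, neg_div] at h
  exact hasSum_re h

lemma term_vonMangoldt_eq_mul_pow {n : ℕ} (hn : n ≠ 0) (σ t : ℝ) (j : ℕ) :
    LSeries.term (fun m : ℕ => (Λ m : ℂ)) (σ + (j * t : ℝ) * I) n
      = (Λ n * (n : ℝ) ^ (-σ) : ℝ) * ((n : ℂ) ^ (-(t * I))) ^ j := by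
  have hpow : ((Λ n * (n : ℝ) ^ (-σ) : ℝ) : ℂ)
      = Λ n * (n : ℂ) ^ (-(σ : ℂ)) := by
    rw [ofReal_mul, ofReal_cpow (by positivity)]
    push_cast
    rfl
  rw [LSeries.term_of_ne_zero hn, div_eq_mul_inv, ← cpow_neg, hpow, mul_assoc,
    ← cpow_nat_mul, ← cpow_add _ _ (Nat.cast_ne_zero.mpr hn)]
  congr 2
  push_cast
  ring

lemma re_term_vonMangoldt_combination_nonneg (σ t : ℝ) (n : ℕ) :
    let a (u : ℝ) : ℝ :=
      (LSeries.term (fun m : ℕ => (Λ m : ℂ)) (σ + u * I) n).re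
    0 ≤ 5 * a 0 + 8 * a t + 4 * a (2 * t) + a (3 * t) := by
  intro a
  rcases eq_or_ne n 0 with rfl | hn
  · simp [a]
  set w : ℂ := (n : ℂ) ^ (-(t * I)) with hw
  set b : ℝ := Λ n * (n : ℝ) ^ (-σ)
  have hwn : ‖w‖ = 1 := by
    rw [hw, norm_natCast_cpow_of_pos (Nat.pos_of_ne_zero hn)]
    simp
  have hb : 0 ≤ b := mul_nonneg ArithmeticFunction.vonMangoldt_nonneg (by positivity)
  have ha (j : ℕ) : a (j * t) = (b * w ^ j : ℂ).re :=
    congrArg re (term_vonMangoldt_eq_mul_pow hn σ t j)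
  have h0 := ha 0
  have h1 := ha 1
  have h2 := ha 2
  have h3 := ha 3
  norm_num only [Nat.cast_zero, Nat.cast_one, Nat.cast_ofNat, zero_mul, one_mul] at h0 h1 h2 h3
  rw [h0, h1, h2, h3]
  refine (mul_nonneg hb (re_five_add_eight_mul_add_nonneg hwn)).trans_eq ?_
  have hreal : (8 * w).re = 8 * w.re ∧ (4 * w ^ 2).re = 4 * (w ^ 2).re := by
    constructor <;> simp only [mul_re, re_ofNat, im_ofNat, zero_mul, sub_zero]
  simp only [re_ofReal_mul, add_re, hreal, re_ofNat, pow_zero, pow_one, one_re]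
  ring

lemma logDeriv_riemannZeta_combination_nonpos {σ : ℝ} (hσ : 1 < σ) (t : ℝ) :
    5 * (logDeriv riemannZeta σ).re + 8 * (logDeriv riemannZeta (σ + t * I)).re
      + 4 * (logDeriv riemannZeta (σ + (2 * t : ℝ) * I)).re
      + (logDeriv riemannZeta (σ + (3 * t : ℝ) * I)).re ≤ 0 := by
  have hsum (u : ℝ) := hasSum_re_term_vonMangoldt (s := σ + u * I) (by simpa using hσ)
  have h := ((((hsum 0).mul_left 5).add ((hsum t).mul_left 8)).add
    ((hsum (2 * t)).mul_left 4)).add (hsum (3 * t))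
  have hnn := h.nonneg fun n => re_term_vonMangoldt_combination_nonneg σ t n
  simp only [ofReal_zero, zero_mul, add_zero] at hnn
  linarith

lemma mul_log_one_div_le {v : ℝ} (hv : 0 < v) : v * Real.log (1 / v) ≤ 0.5 - 0.3068 * v := by
  have hlog : Real.log (1 / v) = Real.log 2 + Real.log (1 / (2 * v)) := by
    rw [← Real.log_mul (by norm_num) (by positivity)]
    congr 1
    field_simp
  have hsub := Real.log_le_sub_one_of_pos (show 0 < 1 / (2 * v) by positivity)
  have hmul : v * (1 / (2 * v)) = 1 / 2 := by field_simp
  rw [hlog]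
  nlinarith [Real.log_two_lt_d9]

lemma log_six_le : Real.log 6 ≤ 1.8056 := by
  rw [show (6 : ℝ) = 2 * 3 by norm_num, Real.log_mul (by norm_num) (by norm_num)]
  linarith [Real.log_two_lt_d9, Real.log_three_lt_d9]

lemma log_nine_fifths_le : Real.log 1.8 ≤ 0.5932 := by
  rw [show (1.8 : ℝ) = 3 ^ 2 / 5 by norm_num, Real.log_div (by norm_num) (by norm_num),
    Real.log_pow]
  push_cast
  linarith [Real.log_three_lt_d9, Real.log_five_gt_d9]

lemma neg_le_mul_log_of_div_one_add_le {v m : ℝ} (hv : 0 < v) (hv1 : v ≤ 0.8)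
    (hm : v / (1 + v) ≤ m) : -(0.5 + 0.287 * v) ≤ v * Real.log m := by
  have hlog : Real.log (v / (1 + v)) = -Real.log (1 / v) - Real.log (1 + v) := by
    rw [Real.log_div hv.ne' (by positivity), one_div, Real.log_inv]
    ring
  have hmono : Real.log (v / (1 + v)) ≤ Real.log m := Real.log_le_log (by positivity) hm
  have hadd : Real.log (1 + v) ≤ 0.5932 :=
    (Real.log_le_log (by positivity) (by linarith)).trans log_nine_fifths_le
  nlinarith [mul_log_one_div_le hv]

lemma mul_log_le_of_le_rpow_mul {v m Y : ℝ} (hv : 0 < v) (hv1 : v ≤ 0.8) (hY : 0 < Y)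
    (hm0 : 0 < m) (hm : m ≤ Y ^ v * (2 / v + 1 / (1 - v))) :
    v * Real.log m ≤ v ^ 2 * Real.log Y + 0.5 + 1.499 * v := by
  have h1v : 0 < 1 - v := by linarith
  have h2v : 0 < 2 - v := by linarith
  have hlog : Real.log (Y ^ v * (2 / v + 1 / (1 - v)))
      = v * Real.log Y + Real.log (1 / v) + Real.log ((2 - v) / (1 - v)) := by
    rw [Real.log_mul (by positivity) (by positivity), Real.log_rpow hY, add_assoc,
      ← Real.log_mul (by positivity) (by positivity)]
    congr 2
    field_simp
    ring
  have hquot : Real.log ((2 - v) / (1 - v)) ≤ 1.8056 := by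
    refine (Real.log_le_log (by positivity) ?_).trans log_six_le
    rw [div_le_iff₀ h1v]
    linarith
  nlinarith [mul_log_one_div_le hv, Real.log_le_log hm0 hm]

lemma neg_le_re_mul_log_norm_riemannZeta_of_re_pos {c z : ℂ} (hc : 1 < c.re) (hz : 0 < z.re)
    (hz' : z.re ≤ 0.8) :
    -(0.5 + 0.287 * z.re) ≤ z.re * Real.log ‖riemannZeta (c + z)‖ := by
  refine neg_le_mul_log_of_div_one_add_le hz hz' (le_trans ?_ (le_norm_riemannZeta ?_)) <;>
    rw [add_re]
  · rw [div_le_div_iff₀ (by linarith) (by linarith)]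
    nlinarith
  · linarith

lemma neg_le_re_mul_log_norm_riemannZeta_of_re_neg {c z : ℂ} {Y : ℕ} (hc : 1 < c.re)
    (hc' : c.re ≤ 1.01) (him : 0.99 ≤ c.im) (hcY : c.im + 2 ≤ Y) (hz : z.re < 0)
    (hz' : ‖z‖ ≤ 0.8) (hne : riemannZeta (c + z) ≠ 0) :
    -(Real.log Y * z.re ^ 2 + 0.5 - 1.499 * z.re) ≤ z.re * Real.log ‖riemannZeta (c + z)‖ := by
  have hY : (0 : ℝ) < Y := by linarith
  have hzre := (abs_le.mp ((abs_re_le_norm z).trans hz')).1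
  have hzim := (abs_le.mp ((abs_im_le_norm z).trans hz')).1
  have hdist : -z.re ≤ ‖c + z - 1‖ := by
    refine (pow_le_pow_iff_left₀ (by linarith) (norm_nonneg _) two_ne_zero).mp ?_
    rw [Complex.sq_norm, normSq_apply]
    simp only [sub_re, add_re, one_re, sub_im, add_im, one_im, sub_zero]
    nlinarith
  have hnorm : ‖c + z‖ ≤ Y := by
    have hc_norm := norm_le_abs_re_add_abs_im c
    rw [abs_of_pos (by linarith), abs_of_pos (by linarith)] at hc_norm
    linarith [norm_add_le c z]
  have hzeta := norm_riemannZeta_le_rpow (v := -z.re) (by exact_mod_cast hY) (by linarith)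
    (by linarith) (by rw [add_re]; linarith) hdist hnorm
  have := mul_log_le_of_le_rpow_mul (by linarith) (by linarith) hY (norm_pos_iff.mpr hne) hzeta
  linarith

section

variable {f : ℂ → ℂ} {r A a b : ℝ}

lemma logCosCoeff_eq_add_integral (hf : Continuous fun θ => Real.log ‖f (circleMap 0 r θ)‖) :
    logCosCoeff f r
      = (∫ θ in -(π / 2)..π / 2, Real.log ‖f (circleMap 0 r θ)‖ * Real.cos θ)
        + ∫ θ in π / 2..π / 2 + π, Real.log ‖f (circleMap 0 r θ)‖ * Real.cos θ := by
  have hcont : Continuous fun θ => Real.log ‖f (circleMap 0 r θ)‖ * Real.cos θ :=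
    hf.mul Real.continuous_cos
  have hper : Function.Periodic
      (fun θ => Real.log ‖f (circleMap 0 r θ)‖ * Real.cos θ) (2 * π) := fun θ => by
    simp only [periodic_circleMap 0 r θ, Real.cos_periodic θ]
  have hshift := hper.intervalIntegral_add_eq 0 (-(π / 2))
  rw [zero_add, show -(π / 2) + 2 * π = π / 2 + π by ring] at hshift
  rw [intervalIntegral.integral_add_adjacent_intervals (hcont.intervalIntegrable _ _)
    (hcont.intervalIntegrable _ _), ← hshift, logCosCoeff]

lemma neg_le_log_norm_mul_cos (hr : 0 < r) (ha : 0 ≤ a) {θ : ℝ}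
    (h : (circleMap 0 r θ).re ≠ 0 →
      -(A * (circleMap 0 r θ).re ^ 2 + a + b * (circleMap 0 r θ).re)
        ≤ (circleMap 0 r θ).re * Real.log ‖f (circleMap 0 r θ)‖) :
    -(A * r * Real.cos θ ^ 2 + (a / r + b * Real.cos θ))
      ≤ Real.log ‖f (circleMap 0 r θ)‖ * Real.cos θ := by
  have hre : (circleMap 0 r θ).re = r * Real.cos θ := by simp [circleMap, exp_re]
  rcases eq_or_ne (Real.cos θ) 0 with hcos | hcos
  · rw [hcos]
    simp only [ne_eq, OfNat.ofNat_ne_zero, not_false_eq_true, zero_pow, mul_zero, add_zero,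
      zero_add, neg_nonpos]
    positivity
  · rw [hre] at h
    refine le_of_mul_le_mul_left (le_of_eq_of_le ?_ ((h (by positivity)).trans_eq ?_)) hr
    · field_simp
      ring
    · ring

lemma neg_le_integral_log_norm_mul_cos_right (hr : 0 < r) (ha : 0 ≤ a)
    (hf : Continuous fun θ => Real.log ‖f (circleMap 0 r θ)‖)
    (h : ∀ z ∈ sphere (0 : ℂ) r, 0 < z.re → -(a + b * z.re) ≤ z.re * Real.log ‖f z‖) :
    -(a * π / r + 2 * b) ≤ ∫ θ in -(π / 2)..π / 2,
      Real.log ‖f (circleMap 0 r θ)‖ * Real.cos θ := by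
  have hint : ∫ θ in -(π / 2)..π / 2, -(0 * r * Real.cos θ ^ 2 + (a / r + b * Real.cos θ))
      = -(a * π / r + 2 * b) := by
    simp only [zero_mul, zero_add, intervalIntegral.integral_neg]
    rw [intervalIntegral.integral_add (by simp)
      ((Real.continuous_cos.const_mul _).intervalIntegrable _ _)]
    simp only [intervalIntegral.integral_const, sub_neg_eq_add, add_halves, smul_eq_mul,
      intervalIntegral.integral_const_mul, integral_cos, Real.sin_pi_div_two, Real.sin_neg]
    ring
  rw [← hint]
  refine intervalIntegral.integral_mono_on (by linarith [Real.pi_pos])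
    (Continuous.intervalIntegrable (by fun_prop) _ _)
    ((hf.mul Real.continuous_cos).intervalIntegrable _ _) fun θ hθ =>
      neg_le_log_norm_mul_cos hr ha fun hne => ?_
  have hre : 0 ≤ (circleMap 0 r θ).re := by
    rw [show (circleMap 0 r θ).re = r * Real.cos θ by simp [circleMap, exp_re]]
    exact mul_nonneg hr.le (Real.cos_nonneg_of_mem_Icc hθ)
  simpa using h _ (circleMap_mem_sphere 0 hr.le θ) (lt_of_le_of_ne hre hne.symm)

lemma neg_le_integral_log_norm_mul_cos_left (hr : 0 < r) (ha : 0 ≤ a)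
    (hf : Continuous fun θ => Real.log ‖f (circleMap 0 r θ)‖)
    (h : ∀ z ∈ sphere (0 : ℂ) r, z.re < 0 →
      -(A * z.re ^ 2 + a - b * z.re) ≤ z.re * Real.log ‖f z‖) :
    -(A * r * (π / 2) + a * π / r + 2 * b) ≤ ∫ θ in π / 2..π / 2 + π,
      Real.log ‖f (circleMap 0 r θ)‖ * Real.cos θ := by
  have hint : ∫ θ in π / 2..π / 2 + π, -(A * r * Real.cos θ ^ 2 + (a / r + -b * Real.cos θ))
      = -(A * r * (π / 2) + a * π / r + 2 * b) := by
    rw [intervalIntegral.integral_neg,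
      intervalIntegral.integral_add (Continuous.intervalIntegrable (by fun_prop) _ _)
        (Continuous.intervalIntegrable (by fun_prop) _ _),
      intervalIntegral.integral_add (by simp)
        ((Real.continuous_cos.const_mul _).intervalIntegrable _ _),
      intervalIntegral.integral_const_mul, integral_cos_sq]
    simp only [Real.cos_add_pi, Real.cos_pi_div_two, Real.sin_add_pi, Real.sin_pi_div_two,
      intervalIntegral.integral_const, add_sub_cancel_left, smul_eq_mul,
      intervalIntegral.integral_const_mul, integral_cos]
    ring
  rw [← hint]
  refine intervalIntegral.integral_mono_on (by linarith [Real.pi_pos])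
    (Continuous.intervalIntegrable (by fun_prop) _ _)
    ((hf.mul Real.continuous_cos).intervalIntegrable _ _) fun θ hθ =>
      neg_le_log_norm_mul_cos hr ha fun hne => ?_
  have hre : (circleMap 0 r θ).re ≤ 0 := by
    rw [show (circleMap 0 r θ).re = r * Real.cos θ by simp [circleMap, exp_re]]
    exact mul_nonpos_of_nonneg_of_nonpos hr.le
      (Real.cos_nonpos_of_pi_div_two_le_of_le hθ.1 (by linarith [hθ.2]))
  rw [neg_mul, ← sub_eq_add_neg]
  exact h _ (circleMap_mem_sphere 0 hr.le θ) (lt_of_le_of_ne hre hne)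

end

lemma differentiableOn_riemannZeta_const_add {c : ℂ} {R : ℝ} (hR : R ≤ c.im) :
    DifferentiableOn ℂ (fun z => riemannZeta (c + z)) (ball 0 R) := by
  intro z hz
  have hne : c + z ≠ 1 := fun h => by
    have him := congrArg im h
    rw [add_im, one_im] at him
    linarith [(abs_le.mp (abs_im_le_norm z)).1, mem_ball_zero_iff.mp hz]
  exact ((differentiableAt_riemannZeta hne).comp z
    (differentiableAt_id.const_add c)).differentiableWithinAt

lemma neg_le_logCosCoeff_riemannZeta {c : ℂ} {r : ℝ} {Y : ℕ} (hc : 1 < c.re) (hc' : c.re ≤ 1.01)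
    (him : 0.99 ≤ c.im) (hcY : c.im + 2 ≤ Y) (hr : 0 < r) (hr' : r ≤ 0.8)
    (hne : ∀ z ∈ sphere (0 : ℂ) r, riemannZeta (c + z) ≠ 0) :
    -(Real.log Y * r * (π / 2) + π / r + 3.572) ≤ logCosCoeff (fun z => riemannZeta (c + z)) r := by
  have hsphere (θ : ℝ) : circleMap 0 r θ ∈ sphere (0 : ℂ) r := circleMap_mem_sphere 0 hr.le θ
  have hzeta : Continuous fun θ : ℝ => riemannZeta (c + circleMap 0 r θ) :=
    (differentiableOn_riemannZeta_const_add him).continuousOn.comp_continuous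
      (continuous_circleMap 0 r) fun θ =>
        (sphere_subset_closedBall.trans (closedBall_subset_ball (by linarith))) (hsphere θ)
  have hcont : Continuous fun θ : ℝ => Real.log ‖riemannZeta (c + circleMap 0 r θ)‖ :=
    hzeta.norm.log fun θ => norm_ne_zero_iff.mpr (hne _ (hsphere θ))
  have hnorm {z : ℂ} (hz : z ∈ sphere (0 : ℂ) r) : ‖z‖ ≤ 0.8 :=
    (mem_sphere_zero_iff_norm.mp hz).trans_le hr'
  have hright := neg_le_integral_log_norm_mul_cos_right (f := fun z => riemannZeta (c + z))
    hr (by norm_num) hcont fun z hz hzre =>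
      neg_le_re_mul_log_norm_riemannZeta_of_re_pos hc hzre ((re_le_norm z).trans (hnorm hz))
  have hleft := neg_le_integral_log_norm_mul_cos_left (f := fun z => riemannZeta (c + z))
    hr (by norm_num) hcont fun z hz hzre =>
      neg_le_re_mul_log_norm_riemannZeta_of_re_neg hc hc' him hcY hzre (hnorm hz) (hne z hz)
  rw [logCosCoeff_eq_add_integral hcont]
  linear_combination hright + hleft

lemma exists_radius_le_logCosCoeff_riemannZeta {c : ℂ} {Y : ℕ} (hc : 1 < c.re)
    (hc' : c.re ≤ 1.01) (him : 0.99 ≤ c.im) (hcY : c.im + 2 ≤ Y) :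
    ∃ r ∈ Set.Ioo (0.79 : ℝ) 0.8,
      (∀ z ∈ closedBall (0 : ℂ) r, riemannZeta (c + z) = 0 → ‖z‖ < r ∧ z.re ≤ 0) ∧
      π * r * -(Real.log Y / 2 + 3.05) ≤ logCosCoeff (fun z => riemannZeta (c + z)) r := by
  obtain ⟨r, ⟨hr, hr'⟩, hne⟩ := exists_radius_ne_zero (a := 0.79) (b := 0.8) (by norm_num)
    (by norm_num) (by norm_num) (differentiableOn_riemannZeta_const_add him)
    (by simpa using riemannZeta_ne_zero_of_one_le_re hc.le)
  have hr0 : 0 < r := by linarith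
  refine ⟨r, ⟨hr, hr'⟩, fun z hz h0 => ⟨?_, ?_⟩, le_trans ?_
    (neg_le_logCosCoeff_riemannZeta hc hc' him hcY hr0 hr'.le hne)⟩
  · exact lt_of_le_of_ne (mem_closedBall_zero_iff.mp hz)
      fun h => hne z (mem_sphere_zero_iff_norm.mpr h) h0
  · by_contra! hcon
    exact riemannZeta_ne_zero_of_one_le_re (by rw [add_re]; linarith) h0
  · have hpi := Real.pi_gt_d2
    have hdiv : π / r ≤ π * r * 1.6024 := by
      rw [div_le_iff₀ hr0]
      have : 0.6241 ≤ r * r := by nlinarith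
      nlinarith
    have hconst : 3.572 ≤ π * r * 1.447 := by nlinarith
    linear_combination hdiv + hconst + (3 / 5000) * (mul_pos Real.pi_pos hr0).le

lemma logDeriv_comp_const_add_zero (f : ℂ → ℂ) (c : ℂ) :
    logDeriv (fun z => f (c + z)) 0 = logDeriv f c := by
  rw [logDeriv_apply, logDeriv_apply, deriv_comp_const_add, add_zero]

lemma neg_le_re_logDeriv_riemannZeta {c : ℂ} {Y : ℕ} (hc : 1 < c.re) (hc' : c.re ≤ 1.01)
    (him : 0.99 ≤ c.im) (hcY : c.im + 2 ≤ Y) :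
    -(Real.log Y / 2 + 3.05) ≤ (logDeriv riemannZeta c).re := by
  obtain ⟨r, ⟨hr, hr'⟩, hzero, hcoeff⟩ :=
    exists_radius_le_logCosCoeff_riemannZeta hc hc' him hcY
  have hr0 : 0 < r := by linarith
  have hle := logCosCoeff_le hr0 (by linarith) (differentiableOn_riemannZeta_const_add him)
    (by simpa using riemannZeta_ne_zero_of_one_le_re hc.le) hzero
  rw [logDeriv_comp_const_add_zero] at hle
  exact le_of_mul_le_mul_left (hcoeff.trans hle) (by positivity)

lemma neg_le_re_logDeriv_riemannZeta_of_eq_zero {c : ℂ} {Y : ℕ} (hc : 1 < c.re)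
    (hc' : c.re ≤ 1.01) (him : 0.99 ≤ c.im) (hcY : c.im + 2 ≤ Y) {d : ℝ} (hd : 0 < d)
    (hd' : d ≤ 0.79) (h0 : riemannZeta (c - d) = 0) :
    -(Real.log Y / 2 + 3.05) + (1 / d - 1.62 * d) ≤ (logDeriv riemannZeta c).re := by
  obtain ⟨r, ⟨hr, hr'⟩, hzero, hcoeff⟩ :=
    exists_radius_le_logCosCoeff_riemannZeta hc hc' him hcY
  have hr0 : 0 < r := by linarith
  have hle := logCosCoeff_add_le_of_eq_zero (by linarith)
    (differentiableOn_riemannZeta_const_add him)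
    (by simpa using riemannZeta_ne_zero_of_one_le_re hc.le) hzero hd (by linarith)
    (by rwa [← sub_eq_add_neg])
  rw [logDeriv_comp_const_add_zero] at hle
  refine le_of_mul_le_mul_left (le_trans ?_ hle) (mul_pos Real.pi_pos hr0)
  rw [mul_add]
  refine add_le_add hcoeff ?_
  gcongr
  rw [div_le_iff₀ (by positivity)]
  have : 0.6241 ≤ r ^ 2 := by nlinarith
  nlinarith

lemma logDeriv_riemannZeta_eq {s : ℂ} (hs : s ≠ 1) (h0 : riemannZeta s ≠ 0) :
    logDeriv riemannZeta s = logDeriv riemannZeta₁ s - 1 / (s - 1) := by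
  have hnhds : riemannZeta₁ =ᶠ[𝓝 s] fun s => (s - 1) * riemannZeta s := by
    filter_upwards [isOpen_ne.mem_nhds hs] with z hz using riemannZeta₁_eq_mul hz
  have hlin : logDeriv (fun z : ℂ => z - 1) s = 1 / (s - 1) := by simp [logDeriv_apply]
  rw [(logDeriv_congr_nhds hnhds).eq_of_nhds,
    logDeriv_mul (f := fun z => z - 1) (g := riemannZeta) s (sub_ne_zero.mpr hs) h0
      (by fun_prop) (differentiableAt_riemannZeta hs), hlin, add_sub_cancel_left]

lemma re_neg_logDeriv_riemannZeta_le {σ : ℝ} (hσ : 1 < σ) (hσ' : σ ≤ 1.1) :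
    (-logDeriv riemannZeta σ).re ≤ 1 / (σ - 1) + 8.4 * (σ - 1) := by
  have h := re_neg_logDeriv_riemannZeta₁_le hσ hσ'
  have hpole : 1 / ((σ : ℂ) - 1) = ((1 / (σ - 1) : ℝ) : ℂ) := by push_cast; rfl
  rw [logDeriv_riemannZeta_eq (by exact_mod_cast hσ.ne')
    (riemannZeta_ne_zero_of_one_le_re (by simpa using hσ.le)), hpole, neg_sub, sub_re, ofReal_re]
  rw [neg_re] at h
  linarith

lemma eight_mul_one_div_le_of_riemannZeta_eq_zero {σ t d : ℝ} {Y : ℕ} (hσ : 1 < σ)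
    (hσ' : σ ≤ 1.01) (ht : 0.99 ≤ t) (htY : 3 * t + 2 ≤ Y) (hd : 0 < d) (hd' : d ≤ 0.79)
    (h0 : riemannZeta (σ + t * I - d) = 0) :
    8 * (1 / d - 1.62 * d)
      ≤ 5 * (1 / (σ - 1) + 8.4 * (σ - 1)) + 13 * (Real.log Y / 2 + 3.05) := by
  have hre (u : ℝ) : (σ + u * I : ℂ).re = σ := by simp
  have him (u : ℝ) : (σ + u * I : ℂ).im = u := by simp
  have hbound {u : ℝ} (hu : 0.99 ≤ u) (hu' : u + 2 ≤ Y) :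
      -(Real.log Y / 2 + 3.05) ≤ (logDeriv riemannZeta (σ + u * I)).re :=
    neg_le_re_logDeriv_riemannZeta (by rwa [hre]) (by rwa [hre]) (by rwa [him]) (by rwa [him])
  have h1 := neg_le_re_logDeriv_riemannZeta_of_eq_zero (by rwa [hre]) (by rwa [hre])
    (by rwa [him]) (by rw [him]; linarith) hd hd' h0
  have h2 := hbound (u := 2 * t) (by linarith) (by linarith)
  have h3 := hbound (u := 3 * t) (by linarith) htY
  have hpole := re_neg_logDeriv_riemannZeta_le hσ (by linarith)
  rw [neg_re] at hpole
  linarith [logDeriv_riemannZeta_combination_nonpos hσ t]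

lemma le_abs_im_of_riemannZeta_eq_zero {s : ℂ} (hs1 : s ≠ 1) (hs : 0.9985 ≤ s.re)
    (h0 : riemannZeta s = 0) : 0.99 ≤ |s.im| := by
  have hre := re_le_norm_sub_one_of_riemannZeta_eq_zero (by linarith) hs1 h0
  have hsq : s.re ^ 2 ≤ ‖s - 1‖ ^ 2 := by gcongr
  rw [Complex.sq_norm, normSq_apply] at hsq
  simp only [sub_re, one_re, sub_im, one_im, sub_zero] at hsq
  exact abs_le_of_sq_le_sq' (by nlinarith [sq_abs s.im]) (abs_nonneg _) |>.2

theorem riemannZeta_ne_zero_of_one_sub_le_re {Y : ℕ} (hY : 29.8 ≤ Real.log Y) {s : ℂ}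
    (hs1 : s ≠ 1) (hs : 1 - 1 / (23 * Real.log Y) ≤ s.re) (hsY : 3 * |s.im| + 2 ≤ Y) :
    riemannZeta s ≠ 0 := by
  wlog hpos : 0 ≤ s.im generalizing s
  · have hconj := this (s := (starRingEnd ℂ) s)
      (fun h => hs1 (by simpa using congrArg (starRingEnd ℂ) h)) (by simpa using hs)
      (by simpa using hsY) (by rw [conj_im]; linarith)
    rw [riemannZeta_conj] at hconj
    exact fun h => hconj (by rw [h, map_zero])
  intro h0
  set ℓ := Real.log Y
  have hℓ : 0 < ℓ := by linarith
  have hwidth : 1 / (23 * ℓ) ≤ 0.0015 := by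
    rw [div_le_iff₀ (by positivity)]
    linarith
  have hre : s.re < 1 := by
    by_contra! h
    exact riemannZeta_ne_zero_of_one_le_re h h0
  have him := le_abs_im_of_riemannZeta_eq_zero hs1 (by linarith) h0
  rw [abs_of_nonneg hpos] at hsY him
  set ε : ℝ := 1 / (6 * ℓ) with hε
  have hε0 : 0 < ε := by positivity
  have hε1 : ε ≤ 0.0056 := by
    rw [hε, div_le_iff₀ (by positivity)]
    linarith
  have hinv : 1 / ε = 6 * ℓ := by rw [hε, one_div_one_div]
  set d : ℝ := 1 + ε - s.re with hd
  have hd0 : 0 < d := by linarith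
  have hineq := eight_mul_one_div_le_of_riemannZeta_eq_zero (σ := 1 + ε) (t := s.im) (d := d)
    (by linarith) (by linarith) him hsY hd0 (by linarith) (by
      convert h0 using 2
      apply Complex.ext <;> simp [hd])
  rw [add_sub_cancel_left, hinv] at hineq
  have hdinv : 1 / d ≤ 37.85 / 8 * ℓ := by linarith
  have hprod : (ε + 1 / (23 * ℓ)) * ℓ = 1 / 6 + 1 / 23 := by
    rw [hε]
    field_simp
  rw [div_le_iff₀ hd0] at hdinv
  nlinarith

end

/-! ### The logarithmic derivative in the zero-free region -/

section

open Complex Metric Topology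

lemma norm_deriv_le_of_re_sub_le {h : ℂ → ℂ} {c z : ℂ} {R A ρ : ℝ} (hA : 0 < A) (hρR : ρ < R)
    (hh : DifferentiableOn ℂ h (ball c R)) (hre : ∀ w ∈ ball c R, (h w - h c).re ≤ A)
    (hz : z ∈ closedBall c ρ) :
    ‖deriv h z‖ ≤ 4 * A * (R + ρ) / (R - ρ) ^ 2 := by
  have hρ : 0 ≤ ρ := dist_nonneg.trans hz
  have hR : 0 < R := by linarith
  have hδ : 0 < (R - ρ) / 2 := by linarith
  have hsub : closedBall z ((R - ρ) / 2) ⊆ closedBall c ((R + ρ) / 2) :=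
    closedBall_subset_closedBall' (by linarith [mem_closedBall.mp hz])
  have hsub' : closedBall c ((R + ρ) / 2) ⊆ ball c R := closedBall_subset_ball (by linarith)
  have hbound : ∀ w ∈ sphere z ((R - ρ) / 2), ‖h w - h c‖ ≤ 2 * A * (R + ρ) / (R - ρ) := by
    intro w hw
    have hwc := mem_closedBall_iff_norm.mp (hsub (sphere_subset_closedBall hw))
    have hmaps : Set.MapsTo (fun v => c + v) (ball 0 R) (ball c R) := fun v hv => by
      simpa using hv
    have hbc := borelCaratheodory_zero (f := fun v => h (c + v) - h c) (z := w - c) hA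
      ((hh.comp (by fun_prop) hmaps).sub_const _) (fun v hv => hre _ (hmaps hv)) hR
      (mem_ball_zero_iff.mpr (by linarith)) (by simp only [add_zero, sub_self])
    rw [add_sub_cancel] at hbc
    refine hbc.trans ?_
    rw [div_le_div_iff₀ (by linarith) (by linarith), mul_assoc, mul_assoc (2 * A)]
    gcongr 2 * A * ?_
    nlinarith
  have hcauchy := norm_deriv_le_of_forall_mem_sphere_norm_le (f := fun w => h w - h c) hδ
    ((hh.sub_const _).diffContOnCl_ball (hsub.trans hsub')) hbound
  rw [deriv_sub_const] at hcauchy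
  refine hcauchy.trans_eq ?_
  have : R - ρ ≠ 0 := by linarith
  field_simp
  ring

lemma norm_logDeriv_le {f : ℂ → ℂ} {c z : ℂ} {R A ρ : ℝ} (hA : 0 < A) (hρR : ρ < R)
    (hf : DifferentiableOn ℂ f (ball c R)) (hne : ∀ w ∈ ball c R, f w ≠ 0)
    (hle : ∀ w ∈ ball c R, ‖f w‖ ≤ Real.exp A * ‖f c‖) (hz : z ∈ closedBall c ρ) :
    ‖logDeriv f z‖ ≤ 4 * A * (R + ρ) / (R - ρ) ^ 2 := by
  have hzR : z ∈ ball c R := closedBall_subset_ball hρR hz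
  have hcR : c ∈ ball c R := mem_ball_self (pos_of_mem_ball hzR)
  obtain ⟨h, hh, hexp⟩ := exists_eqOn_ball_exp hf hne
  have hnhds : ball c R ∈ 𝓝 z := isOpen_ball.mem_nhds hzR
  rw [logDeriv_eq_deriv_of_eventuallyEq_exp (hh.differentiableAt hnhds)
    (hexp.eventuallyEq_of_mem hnhds)]
  refine norm_deriv_le_of_re_sub_le hA hρR hh (fun w hw => ?_) hz
  have hle := hle w hw
  simp only [hexp hw, hexp hcR, norm_exp, ← Real.exp_add, Real.exp_le_exp] at hle
  rw [sub_re]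
  linarith

lemma riemannZeta₁_ne_zero_of_one_sub_le_re {Y : ℕ} (hY : 29.8 ≤ Real.log Y) {s : ℂ}
    (hs : 1 - 1 / (23 * Real.log Y) ≤ s.re) (hsY : 3 * |s.im| + 2 ≤ Y) :
    riemannZeta₁ s ≠ 0 := by
  rcases eq_or_ne s 1 with rfl | hs1
  · rw [riemannZeta₁_one]
    exact one_ne_zero
  · rw [riemannZeta₁_eq_mul hs1]
    exact mul_ne_zero (sub_ne_zero.mpr hs1) (riemannZeta_ne_zero_of_one_sub_le_re hY hs1 hs hsY)

lemma norm_sub_one_mul_le_norm_riemannZeta₁ {s : ℂ} (hs : 1 < s.re) :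
    ‖s - 1‖ * ((s.re - 1) / s.re) ≤ ‖riemannZeta₁ s‖ := by
  have hs1 : s ≠ 1 := by
    rintro rfl
    exact absurd hs (by simp)
  rw [riemannZeta₁_eq_mul hs1, norm_mul]
  gcongr
  exact le_norm_riemannZeta hs

lemma norm_riemannZeta₁_le_of_mem_ball {c z : ℂ} {a Y : ℝ} (ha : 0 < a) (ha' : a ≤ 0.0015)
    (haY : 1 / a + 3.2 ≤ 0.01 * Y) (hc : c.re = 1 + a) (hcY : 3 * |c.im| + 3 ≤ Y)
    (hz : z ∈ ball c (2 * a)) : ‖riemannZeta₁ z‖ ≤ ‖c - 1‖ * (1.02 * Y) := by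
  have hzc : ‖z - c‖ < 2 * a := mem_ball_iff_norm.mp hz
  have hzre : 0.9985 ≤ z.re := by
    have := (abs_le.mp (abs_re_le_norm (z - c))).1
    rw [sub_re] at this
    linarith
  have hY : 0 < Y := by linarith [abs_nonneg c.im]
  have hc1 : a ≤ ‖c - 1‖ := by
    have := (le_abs_self _).trans (abs_re_le_norm (c - 1))
    rwa [sub_re, one_re, hc, add_sub_cancel_left] at this
  have hz1 : ‖z - 1‖ ≤ 3 * ‖c - 1‖ := by
    linarith [norm_sub_le_norm_sub_add_norm_sub z c 1]
  have hznorm : ‖z‖ ≤ Y / 3 + 0.01 := by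
    have hcnorm := norm_le_abs_re_add_abs_im c
    rw [hc, abs_of_pos (by linarith)] at hcnorm
    linarith [norm_le_norm_sub_add z c]
  have hquot : 1 + ‖z‖ / z.re ≤ 1.1 + 1.003 * Y / 3 := by
    have : ‖z‖ / z.re ≤ (Y / 3 + 0.01) / 0.9985 := by gcongr
    refine (add_le_add_right this 1).trans ?_
    rw [← le_sub_iff_add_le', div_le_iff₀ (by norm_num)]
    linarith
  have hone : 1 ≤ ‖c - 1‖ * (1 / a) := by rwa [mul_one_div, one_le_div ha]
  calc ‖riemannZeta₁ z‖ ≤ 1 + ‖z - 1‖ * (1 + ‖z‖ / z.re) := norm_riemannZeta₁_le (by linarith)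
    _ ≤ ‖c - 1‖ * (1 / a) + 3 * ‖c - 1‖ * (1.1 + 1.003 * Y / 3) := by gcongr
    _ = ‖c - 1‖ * (1 / a + 3.3 + 1.003 * Y) := by ring
    _ ≤ ‖c - 1‖ * (1.02 * Y) := by
      gcongr
      linarith [one_div_pos.mpr ha]

lemma mul_add_le_exp_of_le {ℓ : ℝ} (hℓ : 29.8 ≤ ℓ) : 23 * ℓ + 3.2 ≤ 0.01 * Real.exp ℓ := by
  have hexp := Real.pow_div_factorial_le_exp ℓ (by linarith) 5
  have hpow : (29.8 : ℝ) ^ 4 ≤ ℓ ^ 4 := by gcongr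
  norm_num [Nat.factorial] at hexp hpow
  nlinarith

lemma mul_le_exp_mul_of_le {ℓ : ℝ} (hℓ : 29.8 ≤ ℓ) : 24 * ℓ ≤ Real.exp (0.6 * ℓ) := by
  have hexp := Real.pow_div_factorial_le_exp (0.6 * ℓ) (by linarith) 3
  have hpow : (29.8 : ℝ) ^ 2 ≤ ℓ ^ 2 := by gcongr
  norm_num [Nat.factorial] at hexp hpow
  nlinarith

lemma norm_riemannZeta₁_le_exp_mul {Y : ℕ} (hY : 29.8 ≤ Real.log Y) {c z : ℂ}
    (hc : c.re = 1 + 1 / (23 * Real.log Y)) (hcY : 3 * |c.im| + 3 ≤ Y)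
    (hz : z ∈ ball c (2 * (1 / (23 * Real.log Y)))) :
    ‖riemannZeta₁ z‖ ≤ Real.exp (1.6 * Real.log Y) * ‖riemannZeta₁ c‖ := by
  have hYexp : Real.exp (Real.log Y) = Y := Real.exp_log (by linarith [abs_nonneg c.im])
  have hgrowth := mul_le_exp_mul_of_le hY
  have hlin := mul_add_le_exp_of_le hY
  have hlower := norm_sub_one_mul_le_norm_riemannZeta₁ (s := c) (by
    rw [hc]
    exact lt_add_of_pos_right _ (by positivity))
  have hupper := norm_riemannZeta₁_le_of_mem_ball (a := 1 / (23 * Real.log Y)) (by positivity)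
    (by rw [div_le_iff₀ (by positivity)]; linarith)
    (by rwa [one_div_one_div, ← hYexp, Real.log_exp]) hc hcY hz
  rw [hc, add_sub_cancel_left] at hlower
  set ℓ := Real.log Y
  have : 0 < ℓ := by linarith
  have hY_le : 1.02 * Y ≤ Real.exp (1.6 * ℓ) * (1 / (23 * ℓ) / (1 + 1 / (23 * ℓ))) := by
    have hsplit : Real.exp (1.6 * ℓ) = Y * Real.exp (0.6 * ℓ) := by
      rw [← hYexp, ← Real.exp_add]
      ring_nf
    have hfrac : 1 / (23 * ℓ) / (1 + 1 / (23 * ℓ)) = 1 / (23 * ℓ + 1) := by field_simp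
    rw [hsplit, hfrac, mul_one_div, le_div_iff₀ (by positivity), mul_comm 1.02, mul_assoc]
    gcongr
    linarith
  calc ‖riemannZeta₁ z‖ ≤ ‖c - 1‖ * (1.02 * Y) := hupper
    _ ≤ ‖c - 1‖ * (Real.exp (1.6 * ℓ) * (1 / (23 * ℓ) / (1 + 1 / (23 * ℓ)))) := by gcongr
    _ = Real.exp (1.6 * ℓ) * (‖c - 1‖ * (1 / (23 * ℓ) / (1 + 1 / (23 * ℓ)))) := by ring
    _ ≤ Real.exp (1.6 * ℓ) * ‖riemannZeta₁ c‖ := by gcongr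

theorem norm_logDeriv_riemannZeta₁_le {Y : ℕ} (hY : 29.8 ≤ Real.log Y) {s : ℂ}
    (hs : 1 - 1 / (35 * Real.log Y) ≤ s.re) (hs' : s.re ≤ 1 + 1 / (23 * Real.log Y))
    (hsY : 3 * |s.im| + 3 ≤ Y) :
    ‖logDeriv riemannZeta₁ s‖ ≤ 4580 * Real.log Y ^ 2 := by
  set ℓ := Real.log Y with hℓ
  have hℓ0 : 0 < ℓ := by linarith
  set a : ℝ := 1 / (23 * ℓ) with ha
  set η : ℝ := 1 / (35 * ℓ) with hη
  have ha1 : a ≤ 0.0015 := by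
    rw [ha, div_le_iff₀ (by positivity)]
    linarith
  have hηa : η < a := one_div_lt_one_div_of_lt (by positivity) (by linarith)
  have ha0 : 0 < a := by positivity
  set c : ℂ := ⟨1 + a, s.im⟩
  have hne : ∀ z ∈ ball c (2 * a), riemannZeta₁ z ≠ 0 := fun z hz => by
    have hz := mem_ball_iff_norm.mp hz
    have hre := (abs_le.mp (abs_re_le_norm (z - c))).1
    have him := abs_im_le_norm (z - c)
    rw [sub_re] at hre
    rw [sub_im] at him
    refine riemannZeta₁_ne_zero_of_one_sub_le_re hY (by linarith) ?_
    linarith [abs_sub_abs_le_abs_sub z.im c.im]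
  have hsc : s ∈ closedBall c (a + η) := by
    have hdiff : s - c = ((s.re - (1 + a) : ℝ) : ℂ) := by apply Complex.ext <;> simp [c]
    rw [mem_closedBall_iff_norm, hdiff, norm_real, Real.norm_eq_abs, abs_le]
    constructor <;> linarith
  refine (norm_logDeriv_le (by positivity) (by linarith)
    differentiable_riemannZeta₁.differentiableOn hne
    (fun z hz => norm_riemannZeta₁_le_exp_mul hY rfl hsY hz) hsc).trans ?_
  have hdiff : 2 * a - (a + η) = 12 / (805 * ℓ) := by
    rw [ha, hη]
    field_simp
    norm_num
  have hsum : 2 * a + (a + η) = 128 / (805 * ℓ) := by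
    rw [ha, hη]
    field_simp
    norm_num
  rw [hdiff, hsum, ← hℓ]
  field_simp
  norm_num

end

/-! ### The Gaussian kernel and the shift of contour -/

section

open Complex MeasureTheory
open scoped Real ArithmeticFunction.vonMangoldt

/-- On vertical lines this is a Gaussian of width `1 / τ`, and its inverse Laplace transform is a
Gaussian of width `τ` centred at `u`. -/
noncomputable def gaussianKernel (τ u : ℝ) (w : ℂ) : ℂ := exp (τ ^ 2 * w ^ 2 / 2 + w * u)

/-- The unnormalised Gaussian of width `τ`, which weights the primes in a short interval. -/
noncomputable def gaussianWeight (τ x : ℝ) : ℝ := Real.exp (-(x ^ 2 / (2 * τ ^ 2)))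

lemma differentiable_gaussianKernel (τ u : ℝ) : Differentiable ℂ (gaussianKernel τ u) := by
  unfold gaussianKernel
  fun_prop

lemma gaussianKernel_add_mul_I (τ u ε y : ℝ) : gaussianKernel τ u (ε + y * I)
    = exp (-(τ ^ 2 / 2 : ℂ) * y ^ 2 + (τ ^ 2 * ε + u) * I * y + (τ ^ 2 * ε ^ 2 / 2 + ε * u)) := by
  unfold gaussianKernel
  congr 1
  linear_combination (τ ^ 2 * y ^ 2 / 2 : ℂ) * I_sq

lemma norm_gaussianKernel (τ u ε y : ℝ) : ‖gaussianKernel τ u (ε + y * I)‖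
    = Real.exp (τ ^ 2 * ε ^ 2 / 2 + ε * u) * Real.exp (-(τ ^ 2 / 2) * y ^ 2) := by
  have hsplit : (-(τ ^ 2 / 2 : ℂ) * y ^ 2 + (τ ^ 2 * ε + u) * I * y + (τ ^ 2 * ε ^ 2 / 2 + ε * u))
      = ((-(τ ^ 2 / 2) * y ^ 2 + (τ ^ 2 * ε ^ 2 / 2 + ε * u) : ℝ) : ℂ)
        + (((τ ^ 2 * ε + u) * y : ℝ) : ℂ) * I := by
    push_cast
    ring
  rw [gaussianKernel_add_mul_I, norm_exp, ← Real.exp_add, hsplit, add_re, ofReal_re,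
    re_ofReal_mul, I_re, mul_zero, add_zero, add_comm]

lemma integrable_gaussianKernel {τ : ℝ} (hτ : 0 < τ) (u ε : ℝ) :
    Integrable fun y : ℝ => gaussianKernel τ u (ε + y * I) := by
  have hcast : (τ ^ 2 / 2 : ℂ) = ((τ ^ 2 / 2 : ℝ) : ℂ) := by push_cast; rfl
  simp_rw [gaussianKernel_add_mul_I]
  refine integrable_cexp_quadratic ?_ _ _
  rw [hcast, ofReal_re]
  positivity

lemma integral_gaussianKernel {τ : ℝ} (hτ : 0 < τ) (u ε : ℝ) :
    ∫ y : ℝ, gaussianKernel τ u (ε + y * I)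
      = ((√(π / (τ ^ 2 / 2)) * gaussianWeight τ u : ℝ) : ℂ) := by
  have hτ' : (τ : ℂ) ≠ 0 := ofReal_ne_zero.mpr hτ.ne'
  have hcast : (-(τ ^ 2 / 2 : ℂ)) = ((-(τ ^ 2 / 2) : ℝ) : ℂ) := by push_cast; rfl
  have hre : (-(τ ^ 2 / 2 : ℂ)).re < 0 := by
    rw [hcast, ofReal_re, neg_lt_zero]
    positivity
  simp_rw [gaussianKernel_add_mul_I]
  rw [integral_cexp_quadratic hre, ofReal_mul, gaussianWeight, Real.sqrt_eq_rpow,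
    ofReal_cpow (by positivity), ofReal_exp, neg_neg]
  push_cast
  congr 2
  field_simp
  linear_combination ((τ ^ 2 * ε + u : ℂ) ^ 2 * 4) * I_sq

lemma gaussianKernel_mul_exp (τ u v : ℝ) (w : ℂ) :
    gaussianKernel τ u w * exp (-w * v) = gaussianKernel τ (u - v) w := by
  unfold gaussianKernel
  rw [← exp_add]
  push_cast
  ring_nf

lemma integral_norm_gaussianKernel (τ u ε : ℝ) :
    ∫ y : ℝ, ‖gaussianKernel τ u (ε + y * I)‖
      = Real.exp (τ ^ 2 * ε ^ 2 / 2 + ε * u) * √(π / (τ ^ 2 / 2)) := by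
  simp_rw [norm_gaussianKernel]
  rw [integral_const_mul, integral_gaussian]

lemma integral_gaussianKernel_div {τ ε : ℝ} (hτ : 0 < τ) (hε : 0 < ε) (u : ℝ) :
    ∫ y : ℝ, gaussianKernel τ u (ε + y * I) * (1 / (ε + y * I))
      = ((√(π / (τ ^ 2 / 2)) * ∫ v in Set.Ioi (0 : ℝ), gaussianWeight τ (u - v) : ℝ) : ℂ) := by
  have hlaplace (y : ℝ) : gaussianKernel τ u (ε + y * I) * (1 / (ε + y * I))
      = ∫ v in Set.Ioi (0 : ℝ), gaussianKernel τ u (ε + y * I) * exp (-(ε + y * I : ℂ) * v) := by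
    rw [integral_const_mul, integral_exp_mul_complex_Ioi (by simpa using hε), ofReal_zero,
      mul_zero, exp_zero, neg_div_neg_eq]
  simp_rw [hlaplace]
  rw [integral_integral_swap]
  · simp_rw [gaussianKernel_mul_exp, integral_gaussianKernel hτ]
    rw [← integral_const_mul]
    exact integral_ofReal
  · have hprod := (integrable_gaussianKernel hτ u ε).norm.mul_prod (exp_neg_integrableOn_Ioi 0 hε)
    refine hprod.mono' (Continuous.aestronglyMeasurable ?_) (Filter.Eventually.of_forall ?_)
    · unfold gaussianKernel Function.uncurry
      fun_prop
    · rintro ⟨y, v⟩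
      rw [Function.uncurry_apply_pair, norm_mul, norm_exp]
      simp

lemma gaussianKernel_mul_term_vonMangoldt (τ u : ℝ) (w : ℂ) (n : ℕ) :
    gaussianKernel τ u w *
        LSeries.term (fun m : ℕ => (Λ m : ℂ)) (1 + w) n
      = (Λ n / n : ℝ) * gaussianKernel τ (u - Real.log n) w := by
  rcases eq_or_ne n 0 with rfl | hn
  · simp
  have hn' : (n : ℂ) ≠ 0 := Nat.cast_ne_zero.mpr hn
  rw [LSeries.term_of_ne_zero hn, cpow_add _ _ hn', cpow_one, ← gaussianKernel_mul_exp,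
    cpow_def_of_ne_zero hn', neg_mul, exp_neg, natCast_log, mul_comm (Complex.log n)]
  push_cast
  field_simp

lemma integral_norm_gaussianKernel_mul_term_vonMangoldt (τ u ε : ℝ) (n : ℕ) :
    ∫ y : ℝ, ‖gaussianKernel τ u (ε + y * I) *
        LSeries.term (fun m : ℕ => (Λ m : ℂ)) (1 + (ε + y * I)) n‖
      = Real.exp (τ ^ 2 * ε ^ 2 / 2 + ε * u) * √(π / (τ ^ 2 / 2)) *
        ‖LSeries.term (fun m : ℕ => (Λ m : ℂ)) (1 + ε) n‖ := by
  rw [← integral_norm_gaussianKernel, ← integral_mul_const]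
  refine integral_congr_ae (Filter.Eventually.of_forall fun y => ?_)
  simp [LSeries.norm_term_eq]

theorem hasSum_integral_gaussianKernel {τ ε : ℝ} (hτ : 0 < τ) (hε : 0 < ε) (u : ℝ) :
    HasSum (fun n : ℕ => √(π / (τ ^ 2 / 2)) *
        (Λ n / n * gaussianWeight τ (u - Real.log n)))
      (∫ y : ℝ, gaussianKernel τ u (ε + y * I) *
        -logDeriv riemannZeta (1 + (ε + y * I))).re := by
  have hseries (y : ℝ) :
      ∑' n : ℕ, gaussianKernel τ u (ε + y * I) *
          LSeries.term (fun m : ℕ => (Λ m : ℂ)) (1 + (ε + y * I)) n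
        = gaussianKernel τ u (ε + y * I) * -logDeriv riemannZeta (1 + (ε + y * I)) := by
    rw [tsum_mul_left, logDeriv_apply, ← neg_div,
      ← ArithmeticFunction.LSeries_vonMangoldt_eq_deriv_riemannZeta_div (by simpa using hε),
      LSeries]
  have hint (n : ℕ) : Integrable fun y : ℝ => gaussianKernel τ u (ε + y * I) *
      LSeries.term (fun m : ℕ => (Λ m : ℂ)) (1 + (ε + y * I)) n := by
    simp_rw [gaussianKernel_mul_term_vonMangoldt]
    exact (integrable_gaussianKernel hτ _ ε).const_mul _
  have hsum := hasSum_integral_of_summable_integral_norm hint (by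
    simp_rw [integral_norm_gaussianKernel_mul_term_vonMangoldt]
    exact (ArithmeticFunction.LSeriesSummable_vonMangoldt (by simpa using hε)).norm.mul_left _)
  simp_rw [hseries] at hsum
  convert hasSum_re hsum using 2 with n
  simp_rw [gaussianKernel_mul_term_vonMangoldt]
  rw [integral_const_mul, integral_gaussianKernel hτ, ← ofReal_mul, ofReal_re]
  ring

lemma exp_neg_mul_sq_le {b T y : ℝ} (hb : 0 ≤ b) (hT : 0 ≤ T) (hy : T ≤ y) :
    Real.exp (-b * y ^ 2) ≤ Real.exp (-b * T ^ 2) * Real.exp (-b * (y - T) ^ 2) := by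
  rw [← Real.exp_add, Real.exp_le_exp]
  nlinarith [mul_nonneg hb (mul_nonneg hT (sub_nonneg.mpr hy))]

lemma integral_Ioi_exp_neg_mul_sq_le {b T : ℝ} (hb : 0 < b) (hT : 0 ≤ T) :
    ∫ y in Set.Ioi T, Real.exp (-b * y ^ 2) ≤ Real.exp (-b * T ^ 2) * √(π / b) := by
  have hint : Integrable fun y : ℝ => Real.exp (-b * T ^ 2) * Real.exp (-b * (y - T) ^ 2) :=
    ((integrable_exp_neg_mul_sq hb).comp_sub_right T).const_mul _
  calc ∫ y in Set.Ioi T, Real.exp (-b * y ^ 2)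
      ≤ ∫ y in Set.Ioi T, Real.exp (-b * T ^ 2) * Real.exp (-b * (y - T) ^ 2) :=
        setIntegral_mono_on (integrable_exp_neg_mul_sq hb).integrableOn hint.integrableOn
          measurableSet_Ioi fun y hy => exp_neg_mul_sq_le hb.le hT (le_of_lt hy)
    _ ≤ ∫ y, Real.exp (-b * T ^ 2) * Real.exp (-b * (y - T) ^ 2) :=
        setIntegral_le_integral hint (Filter.Eventually.of_forall fun y => by positivity)
    _ = Real.exp (-b * T ^ 2) * √(π / b) := by
        rw [integral_const_mul, integral_sub_right_eq_self (fun y => Real.exp (-b * y ^ 2)),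
          integral_gaussian]

section

variable {g : ℝ → ℂ} {b C T : ℝ}

lemma norm_integral_Ioi_le_of_norm_le_exp (hb : 0 < b) (hT : 0 ≤ T)
    (hg : ∀ y, ‖g y‖ ≤ C * Real.exp (-b * y ^ 2)) :
    ‖∫ y in Set.Ioi T, g y‖ ≤ C * (Real.exp (-b * T ^ 2) * √(π / b)) := by
  have hC : 0 ≤ C := by simpa using (norm_nonneg _).trans (hg 0)
  refine (norm_integral_le_of_norm_le
    ((integrable_exp_neg_mul_sq hb).const_mul C).integrableOn
    (Filter.Eventually.of_forall hg)).trans ?_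
  rw [integral_const_mul]
  gcongr
  exact integral_Ioi_exp_neg_mul_sq_le hb hT

lemma norm_integral_le_add_of_norm_le_exp (hb : 0 < b) (hT : 0 ≤ T)
    (hgm : AEStronglyMeasurable g) (hg : ∀ y, ‖g y‖ ≤ C * Real.exp (-b * y ^ 2)) :
    ‖∫ y, g y‖ ≤ ‖∫ y in -T..T, g y‖ + 2 * (C * (Real.exp (-b * T ^ 2) * √(π / b))) := by
  have hint : Integrable g :=
    ((integrable_exp_neg_mul_sq hb).const_mul C).mono' hgm (Filter.Eventually.of_forall hg)
  have hsplit : ∫ y, g y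
      = (∫ y in Set.Iic (-T), g y) + (∫ y in -T..T, g y) + ∫ y in Set.Ioi T, g y := by
    rw [← intervalIntegral.integral_Iic_sub_Iic hint.integrableOn hint.integrableOn,
      add_sub_cancel, intervalIntegral.integral_Iic_add_Ioi hint.integrableOn hint.integrableOn]
  have hright := norm_integral_Ioi_le_of_norm_le_exp hb hT hg
  have hleft := norm_integral_Ioi_le_of_norm_le_exp (g := fun y => g (-y)) hb hT fun y => by
    simpa only [neg_sq] using hg (-y)
  rw [integral_comp_neg_Ioi] at hleft
  rw [hsplit]
  linarith [norm_add₃_le (a := ∫ y in Set.Iic (-T), g y) (b := ∫ y in -T..T, g y)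
    (c := ∫ y in Set.Ioi T, g y)]

lemma norm_intervalIntegral_le_of_norm_le_exp (hb : 0 < b) (hT : 0 ≤ T) (hC : 0 ≤ C)
    (hg : ∀ y ∈ Set.Ioc (-T) T, ‖g y‖ ≤ C * Real.exp (-b * y ^ 2)) :
    ‖∫ y in -T..T, g y‖ ≤ C * √(π / b) := by
  have hint : Integrable fun y : ℝ => C * Real.exp (-b * y ^ 2) :=
    (integrable_exp_neg_mul_sq hb).const_mul _
  have hTT : -T ≤ T := by linarith
  calc ‖∫ y in -T..T, g y‖ ≤ ∫ y in -T..T, C * Real.exp (-b * y ^ 2) :=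
        intervalIntegral.norm_integral_le_of_norm_le hTT
          (Filter.Eventually.of_forall hg) hint.intervalIntegrable
    _ ≤ ∫ y, C * Real.exp (-b * y ^ 2) := by
        rw [intervalIntegral.integral_of_le hTT]
        exact setIntegral_le_integral hint (Filter.Eventually.of_forall fun y => by positivity)
    _ = C * √(π / b) := by rw [integral_const_mul, integral_gaussian]

end

lemma norm_integral_vertical_le {f : ℂ → ℂ} {a b T H : ℝ} (hab : a ≤ b)
    (hf : DifferentiableOn ℂ f (Set.uIcc a b ×ℂ Set.uIcc (-T) T))
    (hH : ∀ x ∈ Set.Ioc a b, ∀ t, |t| = |T| → ‖f (x + t * I)‖ ≤ H) :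
    ‖∫ y in -T..T, f (b + y * I)‖ ≤ ‖∫ y in -T..T, f (a + y * I)‖ + 2 * (H * (b - a)) := by
  have hrect := integral_boundary_rect_eq_zero_of_differentiableOn f ⟨a, -T⟩ ⟨b, T⟩ hf
  have hside (t : ℝ) (ht : |t| = |T|) : ‖∫ x in a..b, f (x + t * I)‖ ≤ H * (b - a) := by
    have := intervalIntegral.norm_integral_le_of_norm_le_const (a := a) (b := b)
      (f := fun x : ℝ => f (x + t * I)) fun x hx => hH x (by rwa [Set.uIoc_of_le hab] at hx) t ht
    rwa [abs_of_nonneg (sub_nonneg.mpr hab)] at this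
  have hshift : I • ∫ y in -T..T, f (b + y * I) = I • (∫ y in -T..T, f (a + y * I))
      + (∫ x in a..b, f (x + T * I)) - ∫ x in a..b, f (x + (-T : ℝ) * I) := by
    linear_combination hrect
  have hnorm := congrArg norm hshift
  rw [norm_smul, norm_I, one_mul] at hnorm
  have htop := hside T rfl
  have hbottom := hside (-T) (abs_neg T)
  rw [hnorm]
  refine (norm_sub_le _ _).trans ?_
  have := norm_add_le (I • ∫ y in -T..T, f (a + y * I)) (∫ x in a..b, f (x + T * I))
  rw [norm_smul, norm_I, one_mul] at this
  linarith

lemma norm_gaussianKernel_le {τ u ε η x : ℝ} (hu : 0 ≤ u) (hη : 0 ≤ η) (hx : -η ≤ x)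
    (hx' : x ≤ ε) (hε : 0 ≤ ε) (y : ℝ) : ‖gaussianKernel τ u (x + y * I)‖
      ≤ Real.exp (τ ^ 2 * (ε + η) ^ 2 / 2 + ε * u) * Real.exp (-(τ ^ 2 / 2) * y ^ 2) := by
  have hsq : x ^ 2 ≤ (ε + η) ^ 2 := sq_le_sq' (by linarith) (by linarith)
  rw [norm_gaussianKernel]
  gcongr

theorem norm_integral_gaussianKernel_mul_le {Q : ℂ → ℂ} {τ u ε η T K M : ℝ} (hτ : 0 < τ)
    (hu : 0 ≤ u) (hε : 0 ≤ ε) (hη : 0 ≤ η) (hT : 0 ≤ T)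
    (hQ : DifferentiableOn ℂ Q (Set.uIcc (-η) ε ×ℂ Set.uIcc (-T) T))
    (hQc : Continuous fun y : ℝ => Q (ε + y * I))
    (hM : ∀ w : ℂ, -η ≤ w.re → w.re ≤ ε → |w.im| ≤ T → ‖Q w‖ ≤ M)
    (hK : ∀ y : ℝ, ‖Q (ε + y * I)‖ ≤ K) :
    ‖∫ y : ℝ, gaussianKernel τ u (ε + y * I) * Q (ε + y * I)‖ ≤
      (2 * K * (Real.exp (τ ^ 2 * (ε + η) ^ 2 / 2 + ε * u) * Real.exp (-(τ ^ 2 / 2) * T ^ 2))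
        + M * Real.exp (τ ^ 2 * η ^ 2 / 2 - η * u)) * √(π / (τ ^ 2 / 2))
      + 2 * (ε + η) * M *
        (Real.exp (τ ^ 2 * (ε + η) ^ 2 / 2 + ε * u) * Real.exp (-(τ ^ 2 / 2) * T ^ 2)) := by
  set E := Real.exp (τ ^ 2 * (ε + η) ^ 2 / 2 + ε * u)
  set q := Real.exp (-(τ ^ 2 / 2) * T ^ 2) with hq
  have hb : 0 < τ ^ 2 / 2 := by positivity
  have hM0 : 0 ≤ M := (norm_nonneg _).trans (hM 0 (by simpa) (by simpa) (by simpa))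
  have htails := norm_integral_le_add_of_norm_le_exp (C := E * K) hb hT
    (g := fun y => gaussianKernel τ u (ε + y * I) * Q (ε + y * I))
    (((differentiable_gaussianKernel τ u).continuous.comp (by fun_prop)).mul
      hQc).aestronglyMeasurable fun y => by
      rw [norm_mul, mul_right_comm]
      exact mul_le_mul (norm_gaussianKernel_le hu hη (by linarith) le_rfl hε y) (hK y)
        (norm_nonneg _) (by positivity)
  have hshift := norm_integral_vertical_le (H := E * q * M) (by linarith : -η ≤ ε)
    ((differentiable_gaussianKernel τ u).differentiableOn.mul hQ) fun x hx t ht => by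
      have hx₁ := hx.1.le
      rw [Pi.mul_apply, norm_mul, hq, ← sq_abs T, ← ht, sq_abs]
      refine mul_le_mul (norm_gaussianKernel_le hu hη hx₁ hx.2 hε t) ?_ (norm_nonneg _)
        (by positivity)
      exact hM _ (by simpa using hx₁) (by simpa using hx.2) (by simp [ht, abs_of_nonneg hT])
  have hleft := norm_intervalIntegral_le_of_norm_le_exp hb hT
    (C := Real.exp (τ ^ 2 * η ^ 2 / 2 - η * u) * M)
    (g := fun y => gaussianKernel τ u ((-η : ℝ) + y * I) * Q ((-η : ℝ) + y * I))
    (by positivity) fun y hy => by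
      rw [norm_mul, norm_gaussianKernel, neg_sq, neg_mul η, ← sub_eq_add_neg, mul_right_comm]
      gcongr
      exact hM _ (by simp) (by simp; linarith) (by simpa using abs_le.mpr ⟨hy.1.le, hy.2⟩)
  simp only [Pi.mul_apply, sub_neg_eq_add] at hshift
  linarith

end

/-! ### The Gaussian-weighted sum of the von Mangoldt function -/

section

open Complex MeasureTheory
open scoped Real ArithmeticFunction.vonMangoldt

lemma hasSum_vonMangoldt_mul_rpow {σ : ℝ} (hσ : 1 < σ) :
    HasSum (fun n : ℕ => Λ n * (n : ℝ) ^ (-σ)) (-logDeriv riemannZeta σ).re := by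
  rw [neg_re]
  refine (hasSum_re_term_vonMangoldt (s := σ) (by simpa using hσ)).congr_fun fun n => ?_
  rcases eq_or_ne n 0 with rfl | hn
  · simp
  simpa using (congrArg re (term_vonMangoldt_eq_mul_pow hn σ 0 0)).symm

lemma norm_logDeriv_riemannZeta_le {s : ℂ} (hs : 1 < s.re) :
    ‖logDeriv riemannZeta s‖ ≤ (-logDeriv riemannZeta s.re).re := by
  rw [← norm_neg, logDeriv_apply, ← neg_div,
    ← ArithmeticFunction.LSeries_vonMangoldt_eq_deriv_riemannZeta_div hs, LSeries]
  refine tsum_of_norm_bounded (hasSum_vonMangoldt_mul_rpow hs) fun n => ?_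
  rcases eq_or_ne n 0 with rfl | hn
  · simp
  rw [LSeries.norm_term_eq, if_neg hn, Real.rpow_neg n.cast_nonneg, div_eq_mul_inv]
  simp [abs_of_nonneg ArithmeticFunction.vonMangoldt_nonneg]

lemma logDeriv_riemannZeta₁_eq {s : ℂ} (hs : 1 < s.re) :
    logDeriv riemannZeta₁ s = 1 / (s - 1) + logDeriv riemannZeta s := by
  have hs1 : s ≠ 1 := by
    rintro rfl
    simp at hs
  rw [logDeriv_riemannZeta_eq hs1 (riemannZeta_ne_zero_of_one_le_re hs.le), add_sub_cancel]

lemma riemannZeta₁_ne_zero_of_one_lt_re {s : ℂ} (hs : 1 < s.re) : riemannZeta₁ s ≠ 0 := by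
  have hs1 : s ≠ 1 := by
    rintro rfl
    simp at hs
  rw [riemannZeta₁_eq_mul hs1]
  exact mul_ne_zero (sub_ne_zero.mpr hs1) (riemannZeta_ne_zero_of_one_le_re hs.le)

lemma differentiableAt_logDeriv_riemannZeta₁ {s : ℂ} (hs : riemannZeta₁ s ≠ 0) :
    DifferentiableAt ℂ (logDeriv riemannZeta₁) s :=
  (differentiable_riemannZeta₁.analyticAt s).deriv.differentiableAt.div
    differentiable_riemannZeta₁.differentiableAt hs

lemma norm_one_div_add_mul_I_le {ε : ℝ} (hε : 0 < ε) (y : ℝ) :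
    ‖1 / (ε + y * I : ℂ)‖ ≤ 1 / ε := by
  rw [norm_div, norm_one]
  gcongr
  simpa [abs_of_pos hε] using abs_re_le_norm (ε + y * I : ℂ)

section

variable {τ ε : ℝ}

lemma norm_logDeriv_riemannZeta₁_line_le (hε : 0 < ε) (y : ℝ) :
    ‖logDeriv riemannZeta₁ (1 + (ε + y * I))‖
      ≤ 1 / ε + (-logDeriv riemannZeta (1 + ε : ℝ)).re := by
  have hs : 1 < (1 + (ε + y * I) : ℂ).re := by simpa using hε
  rw [logDeriv_riemannZeta₁_eq hs, add_sub_cancel_left]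
  refine (norm_add_le _ _).trans (add_le_add (norm_one_div_add_mul_I_le hε y) ?_)
  simpa using norm_logDeriv_riemannZeta_le hs

lemma continuous_logDeriv_riemannZeta₁_line (hε : 0 < ε) :
    Continuous fun y : ℝ => logDeriv riemannZeta₁ (1 + (ε + y * I)) :=
  continuous_iff_continuousAt.mpr fun y => ContinuousAt.comp (f := fun y : ℝ => 1 + (ε + y * I : ℂ))
    (differentiableAt_logDeriv_riemannZeta₁
      (riemannZeta₁_ne_zero_of_one_lt_re (by simpa using hε))).continuousAt (by fun_prop)

lemma integral_gaussianKernel_mul_neg_logDeriv_riemannZeta (hτ : 0 < τ) (hε : 0 < ε) (u : ℝ) :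
    ∫ y : ℝ, gaussianKernel τ u (ε + y * I) * -logDeriv riemannZeta (1 + (ε + y * I))
      = ((√(π / (τ ^ 2 / 2)) * ∫ v in Set.Ioi (0 : ℝ), gaussianWeight τ (u - v) : ℝ) : ℂ)
        - ∫ y : ℝ, gaussianKernel τ u (ε + y * I) * logDeriv riemannZeta₁ (1 + (ε + y * I)) := by
  have hkernel := integrable_gaussianKernel hτ u ε
  have hpole (y : ℝ) : (ε + y * I : ℂ) ≠ 0 := fun h => hε.ne' (by simpa using congrArg re h)
  rw [← integral_gaussianKernel_div hτ hε, ← integral_sub]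
  · refine integral_congr_ae (Filter.Eventually.of_forall fun y => ?_)
    have := logDeriv_riemannZeta₁_eq (s := 1 + (ε + y * I)) (by simpa using hε)
    rw [add_sub_cancel_left] at this
    linear_combination gaussianKernel τ u (ε + y * I) * this
  · exact hkernel.mul_bdd
      (continuous_const.div (by fun_prop) hpole).aestronglyMeasurable
      (Filter.Eventually.of_forall (norm_one_div_add_mul_I_le hε))
  · exact hkernel.mul_bdd (continuous_logDeriv_riemannZeta₁_line hε).aestronglyMeasurable
      (Filter.Eventually.of_forall (norm_logDeriv_riemannZeta₁_line_le hε))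

lemma summable_vonMangoldt_div_mul_gaussianWeight (hτ : 0 < τ) (u : ℝ) :
    Summable fun n : ℕ => Λ n / n * gaussianWeight τ (u - Real.log n) :=
  (summable_mul_left_iff (by positivity)).mp (hasSum_integral_gaussianKernel hτ one_pos u).summable

theorem integral_gaussianWeight_le_tsum_vonMangoldt_add {u η T M : ℝ} (hτ : 0 < τ) (hτ' : τ ≤ 1)
    (hu : 0 ≤ u) (hε : 0 < ε) (hε' : ε ≤ 0.1) (hη : 0 ≤ η) (hT : 0 ≤ T)
    (hZ : ∀ w : ℂ, -η ≤ w.re → w.re ≤ ε → |w.im| ≤ T → riemannZeta₁ (1 + w) ≠ 0)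
    (hM : ∀ w : ℂ, -η ≤ w.re → w.re ≤ ε → |w.im| ≤ T → ‖logDeriv riemannZeta₁ (1 + w)‖ ≤ M) :
    ∫ v in Set.Ioi (0 : ℝ), gaussianWeight τ (u - v)
      ≤ ∑' n : ℕ, Λ n / n * gaussianWeight τ (u - Real.log n)
        + ((2 * (2 / ε + 8.4 * ε) + 2 * (ε + η) * M) *
          (Real.exp (τ ^ 2 * (ε + η) ^ 2 / 2 + ε * u) * Real.exp (-(τ ^ 2 / 2) * T ^ 2))
          + M * Real.exp (τ ^ 2 * η ^ 2 / 2 - η * u)) := by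
  have hJ : 1 ≤ √(π / (τ ^ 2 / 2)) := by
    rw [Real.one_le_sqrt, one_le_div (by positivity)]
    nlinarith [Real.pi_gt_three]
  have hM0 : 0 ≤ M := (norm_nonneg _).trans (hM 0 (by simpa) (by simpa using hε.le) (by simpa))
  have hline (y : ℝ) : ‖logDeriv riemannZeta₁ (1 + (ε + y * I))‖ ≤ 2 / ε + 8.4 * ε := by
    have := re_neg_logDeriv_riemannZeta_le (σ := 1 + ε) (by linarith) (by linarith)
    rw [add_sub_cancel_left] at this
    linarith [norm_logDeriv_riemannZeta₁_line_le hε y, add_halves (2 / ε), div_right_comm 2 ε 2]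
  have hshift := norm_integral_gaussianKernel_mul_le hτ hu hε.le hη hT
    (Q := fun w => logDeriv riemannZeta₁ (1 + w))
    (fun w hw => by
      rw [mem_reProdIm, Set.uIcc_of_le (by linarith), Set.uIcc_of_le (by linarith)] at hw
      exact ((differentiableAt_logDeriv_riemannZeta₁ (hZ w hw.1.1 hw.1.2
        (abs_le.mpr hw.2))).comp w (by fun_prop)).differentiableWithinAt)
    (continuous_logDeriv_riemannZeta₁_line hε) hM hline
  have hsum := (hasSum_integral_gaussianKernel hτ hε u).tsum_eq
  rw [tsum_mul_left, integral_gaussianKernel_mul_neg_logDeriv_riemannZeta hτ hε, sub_re,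
    ofReal_re] at hsum
  set D := Real.exp (τ ^ 2 * (ε + η) ^ 2 / 2 + ε * u) * Real.exp (-(τ ^ 2 / 2) * T ^ 2)
  set J := √(π / (τ ^ 2 / 2))
  have hside : 2 * (ε + η) * M * D ≤ 2 * (ε + η) * M * D * J :=
    le_mul_of_one_le_right (by positivity) hJ
  refine le_of_mul_le_mul_left ?_ (zero_lt_one.trans_le hJ)
  linarith [re_le_norm (∫ y : ℝ, gaussianKernel τ u (ε + y * I) *
    logDeriv riemannZeta₁ (1 + (ε + y * I)))]

end

lemma gaussianWeight_le_one (τ v : ℝ) : gaussianWeight τ v ≤ 1 :=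
  Real.exp_le_one_iff.mpr (neg_nonpos.mpr (by positivity))

lemma gaussianWeight_le_exp {τ h v ε : ℝ} (hτ : 0 < τ) (hε : 0 ≤ ε) (hετ : ε * τ ^ 2 ≤ h)
    (hv : h ≤ |v|) :
    gaussianWeight τ v ≤ Real.exp (-(h ^ 2 / (2 * τ ^ 2))) * Real.exp (ε * (v + h)) := by
  have : 0 ≤ ε * τ ^ 2 := by positivity
  have hfactor : 0 ≤ (v + h) * (v - h + 2 * (ε * τ ^ 2)) := by
    rcases le_abs.mp hv with hpos | hneg
    · exact mul_nonneg (by linarith) (by linarith)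
    · exact mul_nonneg_of_nonpos_of_nonpos (by linarith) (by linarith)
  rw [gaussianWeight, ← Real.exp_add, Real.exp_le_exp, neg_add_eq_sub, neg_le_sub_iff_le_add,
    div_le_iff₀ (by positivity), add_mul, div_mul_cancel₀ _ (by positivity)]
  linarith

lemma gaussianWeight_sub_log_le {τ h u ε : ℝ} {n : ℕ} (hτ : 0 < τ) (hε : 0 ≤ ε)
    (hετ : ε * τ ^ 2 ≤ h) (hn : n ≠ 0) (hu : h ≤ |u - Real.log n|) :
    gaussianWeight τ (u - Real.log n)
      ≤ Real.exp (-(h ^ 2 / (2 * τ ^ 2))) * Real.exp (ε * (u + h)) * (n : ℝ) ^ (-ε) := by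
  refine (gaussianWeight_le_exp hτ hε hετ hu).trans_eq ?_
  rw [Real.rpow_def_of_pos (by positivity), mul_assoc, ← Real.exp_add (ε * (u + h))]
  ring_nf

lemma half_le_abs_sub_log {x δ : ℝ} {n : ℕ} (hx : 0 < x) (hn : n ≠ 0)
    (hmem : ¬ (x < n ∧ n < x * Real.exp δ)) : δ / 2 ≤ |Real.log x + δ / 2 - Real.log n| := by
  rcases le_or_gt (n : ℝ) x with hle | hlt
  · have := Real.log_le_log (by positivity) hle
    exact le_abs.mpr (Or.inl (by linarith))
  · have := Real.log_le_log (by positivity) (not_lt.mp fun h => hmem ⟨hlt, h⟩)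
    rw [Real.log_mul hx.ne' (Real.exp_ne_zero δ), Real.log_exp] at this
    exact le_abs.mpr (Or.inr (by linarith))

section

variable {x δ τ ε : ℝ}

lemma vonMangoldt_div_mul_gaussianWeight_le (hx : 0 < x) (hτ : 0 < τ) (hε : 0 ≤ ε)
    (hετ : ε * τ ^ 2 ≤ δ / 2) (hno : ∀ p : ℕ, p.Prime → x < p → x * Real.exp δ ≤ p) (n : ℕ) :
    Λ n / n * gaussianWeight τ (Real.log x + δ / 2 - Real.log n)
      ≤ Real.exp (-((δ / 2) ^ 2 / (2 * τ ^ 2))) * Real.exp (ε * (Real.log x + δ)) *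
          (Λ n * (n : ℝ) ^ (-(1 + ε)))
        + Set.indicator ({m ∈ Finset.Ioc 0 ⌊x * Real.exp δ⌋₊ | ¬ m.Prime} : Finset ℕ)
          (fun m => Λ m / x) n := by
  have hΛ : 0 ≤ Λ n := ArithmeticFunction.vonMangoldt_nonneg
  have hind := Set.indicator_nonneg (s := ({m ∈ Finset.Ioc 0 ⌊x * Real.exp δ⌋₊ | ¬ m.Prime} :
    Finset ℕ)) (f := fun m => Λ m / x)
    (fun m _ => div_nonneg ArithmeticFunction.vonMangoldt_nonneg hx.le) n
  rcases eq_or_ne n 0 with rfl | hn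
  · simp
  have hn0 : (0 : ℝ) < n := by positivity
  by_cases hmem : x < n ∧ n < x * Real.exp δ
  · have hprime : ¬ n.Prime := fun hp => (hno n hp hmem.1).not_gt hmem.2
    rw [Set.indicator_of_mem (by
      simpa [hprime, Nat.pos_iff_ne_zero, hn] using Nat.le_floor hmem.2.le)]
    calc Λ n / n * gaussianWeight τ (Real.log x + δ / 2 - Real.log n) ≤ Λ n / x * 1 := by
          gcongr
          · exact (Real.exp_pos _).le
          · exact hmem.1.le
          · exact gaussianWeight_le_one _ _
      _ ≤ _ := by
          rw [mul_one]
          exact le_add_of_nonneg_left (by positivity)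
  · have hweight := gaussianWeight_sub_log_le hτ hε hετ hn (half_le_abs_sub_log hx hn hmem)
    rw [add_assoc, add_halves] at hweight
    rw [neg_add, add_comm (-1), Real.rpow_add hn0, Real.rpow_neg_one]
    refine le_add_of_le_of_nonneg ((mul_le_mul_of_nonneg_left hweight (by positivity)).trans_eq ?_)
      hind
    ring

theorem tsum_vonMangoldt_gaussianWeight_le (hx : 1 ≤ x) (hδ : 0 ≤ δ) (hτ : 0 < τ)
    (hε : 0 < ε) (hε' : ε ≤ 0.1) (hετ : ε * τ ^ 2 ≤ δ / 2)
    (hno : ∀ p : ℕ, p.Prime → x < p → x * Real.exp δ ≤ p) :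
    ∑' n : ℕ, Λ n / n * gaussianWeight τ (Real.log x + δ / 2 - Real.log n)
      ≤ Real.exp (-((δ / 2) ^ 2 / (2 * τ ^ 2))) * Real.exp (ε * (Real.log x + δ)) *
          (1 / ε + 8.4 * ε)
        + 2 * √(x * Real.exp δ) * (Real.log x + δ) / x := by
  have hx0 : 0 < x := by linarith
  have hfar := (hasSum_vonMangoldt_mul_rpow (σ := 1 + ε) (by linarith)).mul_left
    (Real.exp (-((δ / 2) ^ 2 / (2 * τ ^ 2))) * Real.exp (ε * (Real.log x + δ)))
  have hnear := hasSum_subtype_iff_indicator.mp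
    (({m ∈ Finset.Ioc 0 ⌊x * Real.exp δ⌋₊ | ¬ m.Prime} : Finset ℕ).hasSum fun m => Λ m / x)
  rw [← Finset.sum_div, ← Chebyshev.psi_sub_theta_eq_sum_not_prime] at hnear
  refine (hasSum_le (vonMangoldt_div_mul_gaussianWeight_le hx0 hτ hε.le hετ hno)
    (summable_vonMangoldt_div_mul_gaussianWeight hτ _).hasSum (hfar.add hnear)).trans ?_
  have hzeta := re_neg_logDeriv_riemannZeta_le (σ := 1 + ε) (by linarith) (by linarith)
  have hpsi := Chebyshev.psi_sub_theta_le
    (one_le_mul_of_one_le_of_one_le hx (Real.one_le_exp hδ))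
  rw [Real.log_mul hx0.ne' (Real.exp_ne_zero δ), Real.log_exp] at hpsi
  rw [add_sub_cancel_left] at hzeta
  gcongr

end
end

/-! ### Primes in short intervals -/

section

open MeasureTheory
open scoped Real ArithmeticFunction.vonMangoldt

lemma le_integral_gaussianWeight {τ u : ℝ} (hτ : 0 < τ) (hu : 0 ≤ u) :
    τ ≤ ∫ v in Set.Ioi 0, gaussianWeight τ (u - v) := by
  have hb : 0 < 1 / (2 * τ ^ 2) := by positivity
  have hweight (v : ℝ) : gaussianWeight τ (u - v) =
      Real.exp (-(1 / (2 * τ ^ 2)) * (v - u) ^ 2) := by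
    rw [gaussianWeight]
    ring_nf
  simp_rw [hweight]
  have hshift := (measurePreserving_add_right volume u).setIntegral_preimage_emb
    (measurableEmbedding_addRight u)
    (fun v => Real.exp (-(1 / (2 * τ ^ 2)) * (v - u) ^ 2)) (Set.Ioi u)
  simp only [add_sub_cancel_right, Set.preimage_add_const_Ioi, sub_self] at hshift
  have hmass : 2 * τ ≤ √(π / (1 / (2 * τ ^ 2))) := by
    apply Real.le_sqrt_of_sq_le
    rw [div_div_eq_mul_div, div_one]
    nlinarith [Real.pi_gt_three, sq_nonneg τ]
  calc τ ≤ √(π / (1 / (2 * τ ^ 2))) / 2 := by linarith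
    _ = ∫ v in Set.Ioi u, Real.exp (-(1 / (2 * τ ^ 2)) * (v - u) ^ 2) := by
        rw [← hshift, integral_gaussian_Ioi]
    _ ≤ _ := setIntegral_mono_set ((integrable_exp_neg_mul_sq hb).comp_sub_right u).integrableOn
        (.of_forall fun v => by positivity) (.of_forall fun v hv => hu.trans_lt hv)

lemma exp_le_four {t : ℝ} (ht : t ≤ 1.3) : Real.exp t ≤ 4 := by
  rw [← Real.le_log_iff_exp_le (by norm_num), Real.log_four_eq]
  linarith [Real.log_two_gt_d9]

lemma two_mul_sqrt_mul_exp_mul_div_le {x δ : ℝ} (hx : 1 ≤ x) (hδ : 0 ≤ δ) (hδ' : δ ≤ 1) :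
    2 * √(x * Real.exp δ) * (Real.log x + δ) / x ≤ 4 * (Real.log x + 1) / √x := by
  have hlog := Real.log_nonneg hx
  have hsqrt : √(x * Real.exp δ) ≤ 2 * √x := by
    rw [← Real.sqrt_sq zero_le_two, ← Real.sqrt_mul (sq_nonneg 2), mul_comm x]
    gcongr
    exact (exp_le_four (by linarith)).trans (by norm_num)
  calc 2 * √(x * Real.exp δ) * (Real.log x + δ) / x
      ≤ 2 * (2 * √x) * (Real.log x + 1) / x := by gcongr
    _ = 4 * (Real.log x + 1) * (√x / x) := by ring
    _ = _ := by rw [Real.sqrt_div_self', mul_one_div]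

lemma hundred_le_log {x : ℝ} (hx : Real.exp 100 ≤ x) : 100 ≤ Real.log x :=
  (Real.le_log_iff_exp_le ((Real.exp_pos _).trans_le hx)).mpr hx

variable {x δ B : ℝ}

lemma one_div_mul_sq_le {L : ℝ} (hL : 100 ≤ L) (hδ : 0 < δ) (hδ' : δ ≤ 0.001) (hB : 1 ≤ B) :
    1 / L * (δ / (2 * B)) ^ 2 ≤ δ / 2 := by
  have hτ : δ / (2 * B) ≤ δ / 2 := by gcongr; linarith
  calc 1 / L * (δ / (2 * B)) ^ 2 ≤ 1 / 1 * (δ / 2) ^ 2 := by gcongr; linarith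
    _ ≤ δ / 2 := by nlinarith

lemma tsum_vonMangoldt_gaussianWeight_le_of_forall_prime (hx : Real.exp 100 ≤ x) (hδ : 0 < δ)
    (hδ' : δ ≤ 0.001) (hB : 1 ≤ B) (hno : ∀ p : ℕ, p.Prime → x < p → x * Real.exp δ ≤ p) :
    ∑' n : ℕ, Λ n / n * gaussianWeight (δ / (2 * B)) (Real.log x + δ / 2 - Real.log n)
      ≤ Real.exp (-(B ^ 2 / 2)) * (4 * (Real.log x + 1)) + 4 * (Real.log x + 1) / √x := by
  have hx1 : 1 ≤ x := (Real.one_le_exp (by norm_num)).trans hx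
  have hL := hundred_le_log hx
  have hε : 1 / Real.log x ≤ 0.01 := by rw [div_le_iff₀ (by linarith)]; linarith
  have hεL : 1 / Real.log x * Real.log x = 1 := by field_simp
  have hεδ : 1 / Real.log x * δ ≤ 0.01 * 0.001 := by gcongr
  have hexp : Real.exp (1 / Real.log x * (Real.log x + δ)) ≤ 4 := exp_le_four (by linarith)
  have htail : (δ / 2) ^ 2 / (2 * (δ / (2 * B)) ^ 2) = B ^ 2 / 2 := by field_simp
  have hsum := tsum_vonMangoldt_gaussianWeight_le (τ := δ / (2 * B)) hx1 hδ.le (by positivity)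
    (by positivity) (by linarith) (one_div_mul_sq_le hL hδ hδ' hB) hno
  rw [htail, one_div_one_div] at hsum
  refine hsum.trans (add_le_add ?_ (two_mul_sqrt_mul_exp_mul_div_le hx1 hδ.le (by linarith)))
  rw [mul_assoc]
  gcongr
  linarith

lemma le_tsum_vonMangoldt_gaussianWeight_add {η M : ℝ} (hx : Real.exp 100 ≤ x) (hδ : 0 < δ)
    (hδ' : δ ≤ 0.001) (hB : 1 ≤ B) (hη : 0 ≤ η) (hη' : η ≤ 0.1)
    (hZ : ∀ w : ℂ, -η ≤ w.re → w.re ≤ 1 / Real.log x → |w.im| ≤ 2 * B ^ 2 / δ →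
      riemannZeta₁ (1 + w) ≠ 0)
    (hM : ∀ w : ℂ, -η ≤ w.re → w.re ≤ 1 / Real.log x → |w.im| ≤ 2 * B ^ 2 / δ →
      ‖logDeriv riemannZeta₁ (1 + w)‖ ≤ M) :
    δ / (2 * B) ≤
      ∑' n : ℕ, Λ n / n * gaussianWeight (δ / (2 * B)) (Real.log x + δ / 2 - Real.log n)
        + (Real.exp (-(B ^ 2 / 2)) * (16 * (Real.log x + 1) + M)
          + 2 * M * Real.exp (-(η * Real.log x))) := by
  have hL := hundred_le_log hx
  set L := Real.log x
  have hε : 1 / L ≤ 0.01 := by rw [div_le_iff₀ (by linarith)]; linarith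
  have hεL : 1 / L * L = 1 := by field_simp
  have hεδ : 1 / L * δ ≤ 0.01 * 0.001 := by gcongr
  have hM0 : 0 ≤ M := (norm_nonneg _).trans (hM 0 (by simpa) (by simpa using by linarith)
    (by simp only [Complex.zero_im, abs_zero]; positivity))
  have hτ : δ / (2 * B) ≤ 0.001 := by rw [div_le_iff₀ (by positivity)]; linarith
  have htail : -((δ / (2 * B)) ^ 2 / 2) * (2 * B ^ 2 / δ) ^ 2 = -(B ^ 2 / 2) := by field_simp
  have hcontour := (le_integral_gaussianWeight (τ := δ / (2 * B)) (u := L + δ / 2)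
    (by positivity) (by positivity)).trans <|
      integral_gaussianWeight_le_tsum_vonMangoldt_add (ε := 1 / L) (by positivity) (by linarith)
        (by positivity) (by positivity) (by linarith) hη (by positivity) hZ hM
  rw [htail, div_div_eq_mul_div, div_one] at hcontour
  refine hcontour.trans (add_le_add_right (add_le_add ?_ ?_) _)
  · have hexp : Real.exp ((δ / (2 * B)) ^ 2 * (1 / L + η) ^ 2 / 2 + 1 / L * (L + δ / 2)) ≤ 4 := by
      have : (δ / (2 * B)) ^ 2 * (1 / L + η) ^ 2 ≤ 0.001 ^ 2 * (0.01 + 0.1) ^ 2 := by gcongr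
      exact exp_le_four (by linarith)
    calc _ ≤ (2 * (2 * (L + 1)) + 2 * (0.01 + 0.1) * M) * (4 * Real.exp (-(B ^ 2 / 2))) := by
          gcongr; linarith
      _ ≤ (16 * (L + 1) + M) * Real.exp (-(B ^ 2 / 2)) := by
          rw [← mul_assoc]; gcongr; linarith
      _ = _ := mul_comm _ _
  · have hηδ : 0 ≤ η * δ := by positivity
    have hτη : (δ / (2 * B)) ^ 2 * η ^ 2 ≤ 0.001 ^ 2 * 0.1 ^ 2 := by gcongr
    calc M * Real.exp ((δ / (2 * B)) ^ 2 * η ^ 2 / 2 - η * (L + δ / 2))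
        ≤ M * Real.exp (Real.log 2 + -(η * L)) := by
          gcongr; linarith [Real.log_two_gt_d9]
      _ = _ := by rw [Real.exp_add, Real.exp_log zero_lt_two]; ring

/- The Gaussian has width `τ = δ / (2 * B)`, so that it has decayed to `exp (-(B ^ 2 / 2))` at the
end points of `[log x, log x + δ]`, and so has its Mellin transform at height
`2 * B ^ 2 / δ = B / τ`. -/
theorem exists_prime_lt_and_lt_mul_exp {η M : ℝ} (hx : Real.exp 100 ≤ x) (hδ : 0 < δ)
    (hδ' : δ ≤ 0.001) (hB : 1 ≤ B) (hη : 0 ≤ η) (hη' : η ≤ 0.1)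
    (hZ : ∀ w : ℂ, -η ≤ w.re → w.re ≤ 1 / Real.log x → |w.im| ≤ 2 * B ^ 2 / δ →
      riemannZeta₁ (1 + w) ≠ 0)
    (hM : ∀ w : ℂ, -η ≤ w.re → w.re ≤ 1 / Real.log x → |w.im| ≤ 2 * B ^ 2 / δ →
      ‖logDeriv riemannZeta₁ (1 + w)‖ ≤ M)
    (herr : Real.exp (-(B ^ 2 / 2)) * (20 * (Real.log x + 1) + M)
      + 4 * (Real.log x + 1) / √x + 2 * M * Real.exp (-(η * Real.log x)) < δ / (2 * B)) :
    ∃ p : ℕ, p.Prime ∧ x < p ∧ p < x * Real.exp δ := by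
  by_contra! hno
  linarith [tsum_vonMangoldt_gaussianWeight_le_of_forall_prime hx hδ hδ' hB hno,
    le_tsum_vonMangoldt_gaussianWeight_add hx hδ hδ' hB hη hη' hZ hM]

end

/-! ### Explicit constants -/

section

lemma sq_le_two_pow {k : ℕ} (hk : 16 ≤ k) : 256 * k ^ 2 ≤ 2 ^ k := by
  induction k, hk using Nat.le_induction with
  | base => norm_num
  | succ n hn ih =>
    rw [pow_succ 2 n]
    nlinarith

/-- The height up to which the zero-free region is used: the contour reaches up to
`12 * k * 4 ^ (k + 1)`, and the bounds at `s` involve the logarithm of `3 * |s.im| + 3`. -/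
def zeroFreeHeight (k : ℕ) : ℕ := 144 * k * 4 ^ k + 3

lemma cast_zeroFreeHeight (k : ℕ) :
    (zeroFreeHeight k : ℝ) = 3 * (48 * k * (2 ^ k) ^ 2) + 3 := by
  rw [zeroFreeHeight, ← pow_mul, mul_comm k 2, pow_mul]
  push_cast
  ring

lemma le_log_zeroFreeHeight {k : ℕ} (hk : 16 ≤ k) :
    29.8 ≤ Real.log (zeroFreeHeight k) := by
  have hheight : (2 ^ 43 : ℝ) ≤ (zeroFreeHeight k) := by
    have : 4 ^ 16 ≤ 4 ^ k := Nat.pow_le_pow_right (by norm_num) hk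
    have : 2 ^ 43 ≤ 144 * k * 4 ^ k + 3 := by nlinarith
    exact_mod_cast this
  refine le_trans ?_ (Real.log_le_log (by norm_num) hheight)
  rw [Real.log_pow]
  push_cast
  linarith [Real.log_two_gt_d9]

/- Normalising by `16` makes the tangent of `log` at `1` almost sharp in the worst case `k = 16`. -/
lemma log_zeroFreeHeight_le {k : ℕ} (hk : 16 ≤ k) :
    Real.log (zeroFreeHeight k) ≤ 1.871 * k := by
  have hk' : (16 : ℝ) ≤ k := by exact_mod_cast hk
  have h4 : (4 : ℝ) ^ 16 ≤ 4 ^ k := pow_le_pow_right₀ (by norm_num) hk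
  have hheight : (zeroFreeHeight k : ℝ) ≤ 2 ^ (2 * k + 8) * 3 ^ 2 * ((k + 0.01) / 16) := by
    rw [zeroFreeHeight, pow_add, pow_mul]
    push_cast
    linarith
  have htangent : Real.log ((k + 0.01) / 16) ≤ (k + 0.01) / 16 - 1 :=
    Real.log_le_sub_one_of_pos (by positivity)
  calc Real.log (zeroFreeHeight k)
      ≤ Real.log (2 ^ (2 * k + 8) * 3 ^ 2 * ((k + 0.01) / 16)) :=
        Real.log_le_log (by rw [zeroFreeHeight]; positivity) hheight
    _ = (2 * k + 8) * Real.log 2 + 2 * Real.log 3 + Real.log ((k + 0.01) / 16) := by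
        rw [Real.log_mul (by positivity) (by positivity),
          Real.log_mul (by positivity) (by norm_num), Real.log_pow, Real.log_pow]
        push_cast
        rfl
    _ ≤ (2 * k + 8) * 0.6931471808 + 2 * 1.0986122888 + ((k + 0.01) / 16 - 1) := by
        gcongr
        · exact Real.log_two_lt_d9.le
        · exact Real.log_three_lt_d9.le
    _ ≤ 1.871 * k := by linarith

lemma sqrt_six_mul_le {k : ℝ} (hk : 16 ≤ k) : √(6 * k) ≤ 0.6124 * k :=
  Real.sqrt_le_iff.mpr ⟨by positivity, by nlinarith⟩

lemma sqrt_six_mul_le_two_pow_div {k : ℕ} (hk : 16 ≤ k) : √(6 * k) ≤ 2 ^ k / 4096 := by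
  have hk' : (16 : ℝ) ≤ k := by exact_mod_cast hk
  have hpow : (256 : ℝ) * k ^ 2 ≤ 2 ^ k := by exact_mod_cast sq_le_two_pow hk
  have hsqrt := sqrt_six_mul_le hk'
  nlinarith

lemma exp_neg_three_le : Real.exp (-3) ≤ 1 / 20 := by
  rw [← Real.le_log_iff_exp_le (by norm_num), one_div, Real.log_inv, neg_le_neg_iff,
    show (20 : ℝ) = 2 * 10 by norm_num, Real.log_mul (by norm_num) (by norm_num), Real.log_ten_eq]
  linarith [Real.log_two_lt_d9, Real.log_five_lt_d9]

lemma gaussian_tail_error_le {k : ℕ} (hk : 16 ≤ k) :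
    8 * √(6 * k) * (2 ^ k) ^ 2 * (Real.exp (-(3 * k)) * (83 * 2 ^ k)) ≤ 0.05 := by
  have hexp : Real.exp (-(3 * k)) ≤ (1 / 20) ^ k := by
    rw [neg_mul_eq_neg_mul, mul_comm, Real.exp_nat_mul]
    gcongr
    exact exp_neg_three_le
  calc _ ≤ 8 * ((2 : ℝ) ^ k / 4096) * (2 ^ k) ^ 2 * ((1 / 20) ^ k * (83 * 2 ^ k)) := by
        gcongr
        exact sqrt_six_mul_le_two_pow_div hk
    _ = 664 / 4096 * ((2 : ℝ) ^ k * 2 ^ k * 2 ^ k * 2 ^ k * (1 / 20) ^ k) := by ring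
    _ = 664 / 4096 * (4 / 5 : ℝ) ^ k := by
        simp only [← mul_pow]
        norm_num
    _ ≤ 664 / 4096 * (4 / 5 : ℝ) ^ 16 := by
        gcongr ?_ * ?_
        exact pow_le_pow_of_le_one (by norm_num) (by norm_num) hk
    _ ≤ 0.05 := by norm_num

lemma prime_power_error_le {k : ℕ} (hk : 16 ≤ k) :
    8 * √(6 * k) * (2 ^ k) ^ 2 * (4 * 2 ^ k / √(2 ^ (2 ^ k : ℕ))) ≤ 0.05 := by
  have hsqrt : ((2 : ℝ) ^ k) ^ 4 ≤ √(2 ^ (2 ^ k : ℕ)) := by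
    apply Real.le_sqrt_of_sq_le
    rw [← pow_mul, ← pow_mul]
    exact pow_le_pow_right₀ one_le_two (by nlinarith [sq_le_two_pow hk])
  calc _ ≤ 8 * ((2 : ℝ) ^ k / 4096) * (2 ^ k) ^ 2 * (4 * 2 ^ k / (2 ^ k) ^ 4) := by
        gcongr
        exact sqrt_six_mul_le_two_pow_div hk
    _ = 32 / 4096 := by field_simp; norm_num
    _ ≤ 0.05 := by norm_num

lemma shifted_line_polynomial_le {k : ℝ} (hk : 16 ≤ k) :
    8 * √(6 * k) * (4580 * (1.871 * k) ^ 2) ≤ 321800000 * Real.exp (3 * (k / 16 - 1)) := by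
  have hcube : (k / 16) ^ 3 ≤ Real.exp (3 * (k / 16 - 1)) :=
    calc (k / 16) ^ 3 ≤ Real.exp (k / 16 - 1) ^ 3 := by
          gcongr
          linarith [Real.add_one_le_exp (k / 16 - 1)]
      _ = _ := (Real.exp_nat_mul _ 3).symm
  calc 8 * √(6 * k) * (4580 * (1.871 * k) ^ 2)
      ≤ 8 * (0.6124 * k) * (4580 * (1.871 * k) ^ 2) := by
        gcongr
        exact sqrt_six_mul_le hk
    _ ≤ 321800000 * (k / 16) ^ 3 := by
        have : 0 ≤ k ^ 3 := by positivity
        linarith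
    _ ≤ _ := by gcongr

lemma shifted_line_exponent_ge {k : ℕ} (hk : 16 ≤ k) :
    2.709 * k ≤ Real.log 2 * (2 : ℝ) ^ k / (35 * (1.871 * k)) := by
  have hpow : (256 : ℝ) * k ^ 2 ≤ 2 ^ k := by exact_mod_cast sq_le_two_pow hk
  rw [le_div_iff₀ (by positivity)]
  nlinarith [Real.log_two_gt_d9]

lemma exp_neg_twenty_one_le : 321800000 * Real.exp (-21) ≤ 0.3 := by
  have hexp : Real.exp (-21) ≤ 1 / 2 ^ 30 := by
    rw [← Real.le_log_iff_exp_le (by norm_num), one_div, Real.log_inv, Real.log_pow]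
    push_cast
    linarith [Real.log_two_lt_d9]
  linarith

lemma shifted_line_error_le {k : ℕ} (hk : 16 ≤ k) :
    8 * √(6 * k) * (2 ^ k) ^ 2 * (4580 * (1.871 * k) ^ 2) *
      Real.exp (-(Real.log 2 * (2 : ℝ) ^ k / (35 * (1.871 * k)))) ≤ 0.3 := by
  have hk' : (16 : ℝ) ≤ k := by exact_mod_cast hk
  have hpow : ((2 : ℝ) ^ k) ^ 2 = Real.exp (2 * Real.log 2 * k) := by
    rw [← pow_mul, ← Real.exp_log (pow_pos zero_lt_two _), Real.log_pow]
    push_cast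
    ring_nf
  calc _ = 8 * √(6 * k) * (4580 * (1.871 * k) ^ 2) * (Real.exp (2 * Real.log 2 * k) *
        Real.exp (-(Real.log 2 * (2 : ℝ) ^ k / (35 * (1.871 * k))))) := by rw [hpow]; ring
    _ ≤ 321800000 * Real.exp (3 * (k / 16 - 1)) * (Real.exp (2 * Real.log 2 * k) *
        Real.exp (-(2.709 * k))) := by
        gcongr ?_ * (_ * Real.exp (-?_))
        · exact shifted_line_polynomial_le hk'
        · exact shifted_line_exponent_ge hk
    _ = 321800000 * Real.exp (3 * (k / 16 - 1) + 2 * Real.log 2 * k - 2.709 * k) := by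
        rw [mul_assoc, ← Real.exp_add, ← Real.exp_add]
        ring_nf
    _ ≤ 321800000 * Real.exp (-21) := by
        gcongr
        nlinarith [Real.log_two_lt_d9]
    _ ≤ 0.3 := exp_neg_twenty_one_le

lemma log_two_pow_two_pow (k : ℕ) : Real.log (2 ^ (2 ^ k : ℕ)) = Real.log 2 * 2 ^ k := by
  rw [Real.log_pow, mul_comm]
  norm_cast

lemma one_div_log_two_pow_two_pow_le {k : ℕ} (hk : 16 ≤ k) :
    1 / Real.log (2 ^ (2 ^ k : ℕ)) ≤ 1 / (23 * Real.log (zeroFreeHeight k)) := by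
  have hk' : (16 : ℝ) ≤ k := by exact_mod_cast hk
  have hpow : (256 : ℝ) * k ^ 2 ≤ 2 ^ k := by exact_mod_cast sq_le_two_pow hk
  have hge := le_log_zeroFreeHeight hk
  have hle := log_zeroFreeHeight_le hk
  rw [log_two_pow_two_pow]
  refine one_div_le_one_div_of_le (by positivity) ?_
  nlinarith [Real.log_two_gt_d9]

lemma riemannZeta₁_ne_zero_and_norm_logDeriv_le {k : ℕ} (hk : 16 ≤ k) {w : ℂ}
    (hw : -(1 / (35 * Real.log (zeroFreeHeight k))) ≤ w.re)
    (hw' : w.re ≤ 1 / Real.log (2 ^ (2 ^ k : ℕ))) (him : |w.im| ≤ 48 * k * (2 ^ k) ^ 2) :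
    riemannZeta₁ (1 + w) ≠ 0 ∧
      ‖logDeriv riemannZeta₁ (1 + w)‖ ≤ 4580 * Real.log (zeroFreeHeight k) ^ 2 := by
  have hge := le_log_zeroFreeHeight hk
  have hheight := cast_zeroFreeHeight k
  have hε := one_div_log_two_pow_two_pow_le hk
  have hη : 1 / (35 * Real.log (zeroFreeHeight k)) ≤ 1 / (23 * Real.log (zeroFreeHeight k)) := by
    gcongr
    norm_num
  have hre : (1 + w).re = 1 + w.re := by simp
  have him' : (1 + w).im = w.im := by simp
  constructor
  · exact riemannZeta₁_ne_zero_of_one_sub_le_re hge (by linarith) (by rw [him']; linarith)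
  · exact norm_logDeriv_riemannZeta₁_le hge (by linarith) (by linarith) (by rw [him']; linarith)

/- With `B = √(6 * k)` the Gaussian tails are `exp (-(3 * k))` times `O(2 ^ k)`, and they are
smaller than the main term, of order `4 ^ (-k) / √k`, because `exp 3 > 8`. -/
lemma total_error_lt {k : ℕ} (hk : 16 ≤ k) :
    Real.exp (-(√(6 * k) ^ 2 / 2)) *
        (20 * (Real.log (2 ^ (2 ^ k : ℕ)) + 1) + 4580 * Real.log (zeroFreeHeight k) ^ 2)
      + 4 * (Real.log (2 ^ (2 ^ k : ℕ)) + 1) / √(2 ^ (2 ^ k : ℕ))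
      + 2 * (4580 * Real.log (zeroFreeHeight k) ^ 2) *
        Real.exp (-(1 / (35 * Real.log (zeroFreeHeight k)) * Real.log (2 ^ (2 ^ k : ℕ))))
      < 1 / 4 ^ (k + 1) / (2 * √(6 * k)) := by
  have hk' : (16 : ℝ) ≤ k := by exact_mod_cast hk
  have hpow : (256 : ℝ) * k ^ 2 ≤ 2 ^ k := by exact_mod_cast sq_le_two_pow hk
  have hℓ0 : 0 < Real.log (zeroFreeHeight k) := by linarith [le_log_zeroFreeHeight hk]
  have hM : 4580 * Real.log (zeroFreeHeight k) ^ 2 ≤ 4580 * (1.871 * k) ^ 2 := by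
    gcongr
    exact log_zeroFreeHeight_le hk
  have hM' : 4580 * Real.log (zeroFreeHeight k) ^ 2 ≤ 63 * 2 ^ k := hM.trans (by nlinarith)
  have hL : Real.log 2 * 2 ^ k + 1 ≤ 2 ^ k := by nlinarith [Real.log_two_lt_d9]
  have hdecay : Real.log 2 * 2 ^ k / (35 * (1.871 * k)) ≤
      1 / (35 * Real.log (zeroFreeHeight k)) * (Real.log 2 * 2 ^ k) := by
    rw [one_div_mul_eq_div]
    gcongr
    exact log_zeroFreeHeight_le hk
  have hmain : 1 / 4 ^ (k + 1) / (2 * √(6 * k)) = 1 / (8 * √(6 * k) * (2 ^ k) ^ 2) := by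
    rw [div_div, ← pow_mul, mul_comm k 2, pow_mul]
    ring_nf
  rw [Real.sq_sqrt (by positivity), show 6 * (k : ℝ) / 2 = 3 * k by ring, log_two_pow_two_pow,
    hmain, lt_div_iff₀' (by positivity)]
  calc _ ≤ 8 * √(6 * k) * (2 ^ k) ^ 2 * (Real.exp (-(3 * k)) * (20 * 2 ^ k + 63 * 2 ^ k)
        + 4 * 2 ^ k / √(2 ^ (2 ^ k : ℕ)) + 2 * (4580 * (1.871 * k) ^ 2) *
        Real.exp (-(Real.log 2 * 2 ^ k / (35 * (1.871 * k))))) := by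
        gcongr 8 * √(6 * k) * (2 ^ k) ^ 2 * (Real.exp (-(3 * k)) * (20 * ?_ + ?_)
          + 4 * ?_ / √(2 ^ (2 ^ k : ℕ)) + 2 * ?_ * Real.exp (-?_))
    _ < 1 := by
        linarith [gaussian_tail_error_le hk, prime_power_error_le hk, shifted_line_error_le hk]

lemma exp_hundred_le {k : ℕ} (hk : 16 ≤ k) : Real.exp 100 ≤ 2 ^ (2 ^ k : ℕ) := by
  have hpow : (2 : ℝ) ^ 16 ≤ 2 ^ k := pow_le_pow_right₀ one_le_two hk
  rw [← Real.le_log_iff_exp_le (by positivity), log_two_pow_two_pow]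
  nlinarith [Real.log_two_gt_d9]

theorem exists_prime_of_sixteen_le {k : ℕ} (hk : 16 ≤ k) :
    ∃ p : ℕ, p.Prime ∧ (2 : ℝ) ^ (2 ^ k : ℕ) < p ∧
      p < (2 : ℝ) ^ (2 ^ k : ℕ) * Real.exp (1 / 4 ^ (k + 1)) := by
  have hk' : (16 : ℝ) ≤ k := by exact_mod_cast hk
  have hpow : (4 : ℝ) ^ 16 ≤ 4 ^ (k + 1) := pow_le_pow_right₀ (by norm_num) (by lia)
  have hge := le_log_zeroFreeHeight hk
  have hT : 2 * √(6 * k) ^ 2 / (1 / 4 ^ (k + 1)) = 48 * k * ((2 : ℝ) ^ k) ^ 2 := by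
    rw [Real.sq_sqrt (by positivity), ← pow_mul, mul_comm k 2, pow_mul, div_div_eq_mul_div]
    ring
  refine exists_prime_lt_and_lt_mul_exp (B := √(6 * k))
    (η := 1 / (35 * Real.log (zeroFreeHeight k))) (exp_hundred_le hk) (by positivity) ?_
    (Real.one_le_sqrt.mpr (by linarith)) (by positivity) ?_ ?_ ?_ (total_error_lt hk)
  · rw [div_le_iff₀ (by positivity)]
    linarith
  · rw [div_le_iff₀ (by positivity)]
    linarith
  · rw [hT]
    exact fun w h₁ h₂ h₃ => (riemannZeta₁_ne_zero_and_norm_logDeriv_le hk h₁ h₂ h₃).1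
  · rw [hT]
    exact fun w h₁ h₂ h₃ => (riemannZeta₁_ne_zero_and_norm_logDeriv_le hk h₁ h₂ h₃).2

end

/-! ### Proth primes -/

section

/-- Application `f n`, with `n` in constructor form, so that kernel reduction evaluates `n` to a
literal before `f` is unfolded. -/
def strictApply {α : Type} (f : ℕ → α) (n : ℕ) : α :=
  Nat.rec (f 0) (fun m _ => f (Nat.succ m)) n

lemma strictApply_eq {α : Type} (f : ℕ → α) (n : ℕ) : strictApply f n = f n := by
  cases n <;> rfl

/-- `x ^ (2 ^ (2 ^ j))` modulo `p`, by `2 ^ j` successive squarings; the recursion on `j` keeps the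
depth of the kernel reduction logarithmic in their number. -/
def iterSqMod (p j : ℕ) : ℕ → ℕ :=
  Nat.rec (fun x => Nat.mod (Nat.mul x x) p) (fun _ ih x => strictApply ih (ih x)) j

/-- `a ^ (2 ^ (2 ^ r - 1))` modulo `p`, using `2 ^ r - 1 = 1 + 2 + ⋯ + 2 ^ (r - 1)`. -/
def powMersenneMod (p r a : ℕ) : ℕ :=
  Nat.rec a (fun t y => strictApply (iterSqMod p t) y) r

/-- The candidate `2 ^ (2 ^ (r + 1)) + j * 2 ^ (2 ^ r + 1) + 1` for a prime just above
`2 ^ (2 ^ (r + 1))`; it is a Proth number. -/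
def prothNum (r j : ℕ) : ℕ := 2 ^ 2 ^ (r + 1) + j * 2 ^ (2 ^ r + 1) + 1

/-- Proth's test for `p = prothNum r j` with base `a`: whether `a ^ ((p - 1) / 2) = -1` modulo `p`.
It is written with the binary operations on `ℕ` that the kernel evaluates natively. -/
def prothTest (r j a : ℕ) : Bool :=
  strictApply (fun p => Nat.beq (Nat.succ (strictApply (iterSqMod p r)
    (Nat.mod (Nat.mul (powMersenneMod p r a) (a ^ j)) p))) p) (prothNum r j)

lemma cast_iterSqMod (p j x : ℕ) : (iterSqMod p j x : ZMod p) = (x : ZMod p) ^ 2 ^ 2 ^ j := by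
  induction j generalizing x with
  | zero =>
    change ((x * x % p : ℕ) : ZMod p) = _
    rw [ZMod.natCast_mod, Nat.cast_mul, pow_zero, pow_one, sq]
  | succ j ih =>
    change ((strictApply (iterSqMod p j) (iterSqMod p j x) : ℕ) : ZMod p) = _
    rw [strictApply_eq, ih, ih, ← pow_mul, ← pow_add, ← two_mul, pow_succ' 2 j]

lemma cast_powMersenneMod (p r a : ℕ) :
    (powMersenneMod p r a : ZMod p) = (a : ZMod p) ^ 2 ^ (2 ^ r - 1) := by
  induction r with
  | zero => exact (pow_one _).symm
  | succ r ih =>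
    change ((strictApply (iterSqMod p r) (powMersenneMod p r a) : ℕ) : ZMod p) = _
    have : 1 ≤ 2 ^ r := Nat.one_le_two_pow
    rw [strictApply_eq, cast_iterSqMod, ih, ← pow_mul, ← pow_add, pow_succ 2 r]
    congr 2
    lia

lemma pow_eq_neg_one_of_prothTest {r j a : ℕ} (h : prothTest r j a = true) :
    ((a : ZMod (prothNum r j)) ^ (2 ^ (2 ^ r - 1) + j)) ^ 2 ^ 2 ^ r = -1 := by
  rw [prothTest, strictApply_eq, strictApply_eq, Nat.beq_eq, Nat.succ_eq_add_one] at h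
  set p := prothNum r j
  have hbase : ((powMersenneMod p r a * a ^ j % p : ℕ) : ZMod p) =
      (a : ZMod p) ^ (2 ^ (2 ^ r - 1) + j) := by
    rw [ZMod.natCast_mod, Nat.cast_mul, cast_powMersenneMod, Nat.cast_pow, pow_add]
  rw [eq_neg_iff_add_eq_zero, ← hbase, ← cast_iterSqMod, ← ZMod.natCast_self p]
  exact_mod_cast congrArg (Nat.cast : ℕ → ZMod p) h

/- Proth's criterion: `a ^ h` has order `2 ^ (m + 1)` modulo `q`. -/
lemma two_pow_dvd_sub_one_of_prime_dvd {p h m a q : ℕ} (hp : p = h * 2 ^ (m + 1) + 1)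
    (ha : ((a : ZMod p) ^ h) ^ 2 ^ m = -1) (hq : q.Prime) (hdvd : q ∣ p) :
    2 ^ (m + 1) ∣ q - 1 := by
  have : Fact q.Prime := ⟨hq⟩
  have hq2 : q ≠ 2 := by
    rintro rfl
    have : 2 ∣ h * 2 ^ (m + 1) := (dvd_pow_self 2 m.succ_ne_zero).mul_left h
    lia
  have : Fact (2 < q) := ⟨hq.two_le.lt_of_ne' hq2⟩
  have hb : ((a : ZMod q) ^ h) ^ 2 ^ m = -1 := by
    simpa only [map_pow, map_natCast, map_neg, map_one] using
      congrArg (ZMod.castHom hdvd (ZMod q)) ha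
  have hb0 : (a : ZMod q) ^ h ≠ 0 := by
    intro h0
    rw [h0, zero_pow (by positivity)] at hb
    exact one_ne_zero (neg_eq_zero.mp hb.symm)
  have horder : orderOf ((a : ZMod q) ^ h) = 2 ^ (m + 1) := by
    apply orderOf_eq_prime_pow
    · rw [hb]
      exact ZMod.neg_one_ne_one
    · rw [pow_succ, pow_mul, hb, neg_one_sq]
  exact horder ▸ orderOf_dvd_of_pow_eq_one (ZMod.pow_card_sub_one_eq_one hb0)

lemma prime_of_pow_eq_neg_one {p h m a : ℕ} (hp : p = h * 2 ^ (m + 1) + 1) (hh : 1 ≤ h)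
    (ha : ((a : ZMod p) ^ h) ^ 2 ^ m = -1)
    (hdvd : ∀ t, 1 ≤ t → (2 ^ (m + 1) * t + 1) ^ 2 ≤ p → ¬ 2 ^ (m + 1) * t + 1 ∣ p) :
    p.Prime := by
  by_contra hnp
  have hp2 : 2 ≤ p := by
    have : 1 ≤ h * 2 ^ (m + 1) := Nat.mul_pos hh (by positivity)
    lia
  have hq : p.minFac.Prime := Nat.minFac_prime (by lia)
  obtain ⟨t, ht⟩ := two_pow_dvd_sub_one_of_prime_dvd hp ha hq p.minFac_dvd
  have hqt : p.minFac = 2 ^ (m + 1) * t + 1 := by have := hq.two_le; lia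
  refine hdvd t (Nat.pos_of_ne_zero ?_) (hqt ▸ Nat.minFac_sq_le_self (by lia) hnp)
    (hqt ▸ p.minFac_dvd)
  rintro rfl
  exact hq.one_lt.ne' hqt

lemma prime_prothNum {r j a : ℕ} (ha : prothTest r j a = true)
    (hj : j * 2 ^ (2 ^ r + 1) + 1 ≤ 2 ^ 2 ^ (r + 1)) : (prothNum r j).Prime := by
  have hsplit : 2 ^ 2 ^ (r + 1) = 2 ^ (2 ^ r - 1) * 2 ^ (2 ^ r + 1) := by
    have : 1 ≤ 2 ^ r := Nat.one_le_two_pow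
    rw [← pow_add, pow_succ 2 r]
    congr 1
    lia
  have hsq : (2 ^ (2 ^ r + 1)) ^ 2 = 4 * 2 ^ 2 ^ (r + 1) := by
    rw [← pow_mul, show (2 ^ r + 1) * 2 = 2 + 2 ^ (r + 1) by ring, pow_add]
    rfl
  refine prime_of_pow_eq_neg_one (by rw [prothNum, hsplit]; ring)
    (le_add_right Nat.one_le_two_pow) (pow_eq_neg_one_of_prothTest ha) fun t ht hle => ?_
  have hlt : (2 ^ (2 ^ r + 1)) ^ 2 < (2 ^ (2 ^ r + 1) * t + 1) ^ 2 := by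
    have := Nat.le_mul_of_pos_right (2 ^ (2 ^ r + 1)) ht
    gcongr
    lia
  rw [prothNum] at hle
  lia

lemma add_lt_mul_exp_one_div {x c d : ℝ} (hx : 0 < x) (hd : 0 < d) (h : c * d ≤ x) :
    x + c < x * Real.exp (1 / d) :=
  calc x + c ≤ x * (1 / d + 1) := by
        rw [← le_div_iff₀ hd] at h
        rw [mul_add, mul_one_div, mul_one]
        linarith
    _ < x * Real.exp (1 / d) := by
        gcongr
        exact Real.add_one_lt_exp (by positivity)

lemma exists_prime_of_prothTest (r j a : ℕ) (ha : prothTest r j a = true)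
    (hj : (j * 2 ^ (2 ^ r + 1) + 1) * 4 ^ (r + 2) ≤ 2 ^ 2 ^ (r + 1)) :
    ∃ p : ℕ, p.Prime ∧ (2 : ℝ) ^ (2 ^ (r + 1) : ℕ) < p ∧
      p < (2 : ℝ) ^ (2 ^ (r + 1) : ℕ) * Real.exp (1 / 4 ^ (r + 2)) := by
  have hcast : (prothNum r j : ℝ) = 2 ^ 2 ^ (r + 1) + (j * 2 ^ (2 ^ r + 1) + 1) := by
    rw [prothNum]
    push_cast
    ring
  refine ⟨prothNum r j, prime_prothNum ha ((Nat.le_mul_of_pos_right _ (by positivity)).trans hj),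
    ?_, ?_⟩
  · rw [hcast]
    exact lt_add_of_pos_right _ (by positivity)
  · rw [hcast]
    exact add_lt_mul_exp_one_div (by positivity) (by positivity) (by exact_mod_cast hj)

lemma pow_eq_neg_one_of_mod {p a h m : ℕ} (hmod : (a ^ h % p) ^ 2 ^ m % p + 1 = p) :
    ((a : ZMod p) ^ h) ^ 2 ^ m = -1 := by
  rw [eq_neg_iff_add_eq_zero, ← ZMod.natCast_self p]
  simpa using congrArg (Nat.cast : ℕ → ZMod p) hmod

lemma prime_4295294977 : Nat.Prime 4295294977 := by
  have hpow : (((5 : ℕ) : ZMod 4295294977) ^ 65541) ^ 2 ^ 15 = -1 :=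
    pow_eq_neg_one_of_mod (by decide +kernel)
  refine prime_of_pow_eq_neg_one (h := 65541) (by norm_num) (by norm_num) hpow fun t ht hle => ?_
  obtain rfl : t = 1 := by
    by_contra hne
    have hlt : 65540 < 2 ^ (15 + 1) * t + 1 := by lia
    exact absurd ((Nat.pow_lt_pow_left hlt two_ne_zero).trans_le hle) (by norm_num)
  norm_num

/- For `k = 5` none of the numbers `prothNum 4 j` in the interval is prime. -/
lemma exists_prime_of_eq_five :
    ∃ p : ℕ, p.Prime ∧ (2 : ℝ) ^ (2 ^ 5 : ℕ) < p ∧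
      p < (2 : ℝ) ^ (2 ^ 5 : ℕ) * Real.exp (1 / 4 ^ (5 + 1)) := by
  refine ⟨4295294977, prime_4295294977, by norm_num, ?_⟩
  have h := add_lt_mul_exp_one_div (x := 2 ^ 2 ^ 5) (c := 327681) (d := 4 ^ (5 + 1))
    (by positivity) (by positivity) (by norm_num)
  convert h using 1
  norm_num

lemma exists_prime_of_lt_sixteen {k : ℕ} (hk : 3 ≤ k) (hk' : k < 16) :
    ∃ p : ℕ, p.Prime ∧ (2 : ℝ) ^ (2 ^ k : ℕ) < p ∧
      p < (2 : ℝ) ^ (2 ^ k : ℕ) * Real.exp (1 / 4 ^ (k + 1)) := by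
  interval_cases k
  · exact exists_prime_of_prothTest 2 0 3 (by decide +kernel) (by decide +kernel)
  · exact exists_prime_of_prothTest 3 0 3 (by decide +kernel) (by decide +kernel)
  · exact exists_prime_of_eq_five
  · exact exists_prime_of_prothTest 5 3 3 (by decide +kernel) (by decide +kernel)
  · exact exists_prime_of_prothTest 6 75 3 (by decide +kernel) (by decide +kernel)
  · exact exists_prime_of_prothTest 7 52 7 (by decide +kernel) (by decide +kernel)
  · exact exists_prime_of_prothTest 8 138 3 (by decide +kernel) (by decide +kernel)
  · exact exists_prime_of_prothTest 9 153 3 (by decide +kernel) (by decide +kernel)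
  · exact exists_prime_of_prothTest 10 1011 3 (by decide +kernel) (by decide +kernel)
  · exact exists_prime_of_prothTest 11 580 5 (by decide +kernel) (by decide +kernel)
  · exact exists_prime_of_prothTest 12 1311 3 (by decide +kernel) (by decide +kernel)
  · exact exists_prime_of_prothTest 13 4153 5 (by decide +kernel) (by decide +kernel)
  · exact exists_prime_of_prothTest 14 13132 7 (by decide +kernel) (by decide +kernel)

end

/-- For every integer `i ≥ 4`, there is a prime `p` with
`2^(2^(i-1)) < p < 2^(2^(i-1)) · e^(1/4^i)`. -/
theorem prime_near_two_pow_two_pow (i : ℕ) (hi : 4 ≤ i) :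
    ∃ p : ℕ, p.Prime ∧ (2 : ℝ) ^ (2 ^ (i - 1) : ℕ) < (p : ℝ) ∧
      (p : ℝ) < (2 : ℝ) ^ (2 ^ (i - 1) : ℕ) * Real.exp (1 / 4 ^ i) := by
  obtain ⟨k, rfl⟩ : ∃ k, i = k + 1 := ⟨i - 1, by lia⟩
  rw [Nat.add_sub_cancel]
  rcases lt_or_ge k 16 with hk | hk
  · exact exists_prime_of_lt_sixteen (by lia) hk
  · exact exists_prime_of_sixteen_le hk
end
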